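/- Let f : 𝔹 → ℂ be holomorphic with f(0) = 1, F(x) = f(x)·x for x ∈ 𝔹, and assume F is biholomorphic on 𝔹. Then for every u ∈ X with ‖u‖ = 1 and every λ ∈ [0,1), ‖(1/3!)·D³F(0)(u,u,u) − λ·(1/2!)·D²F(0)(u, (1/2!)·D²F(0)(u,u))‖ ≤ 1 + 2·exp(−2λ/(1−λ)). -/

import Mathlib

open Metric Set

noncomputable section

/-- A holomorphic map is biholomorphic on an open set `s` if it is holomorphic and injective
on `s` and admits a holomorphic inverse on the image `f '' s`. -/
def IsBiholoOn {E₁ E₂ : Type*} [NormedAddCommGroup E₁] [NormedSpace ℂ E₁]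
    [NormedAddCommGroup E₂] [NormedSpace ℂ E₂] (f : E₁ → E₂) (s : Set E₁) : Prop :=
  DifferentiableOn ℂ f s ∧ Set.InjOn f s ∧
    ∃ g : E₂ → E₁, DifferentiableOn ℂ g (f '' s) ∧ ∀ x ∈ s, g (f x) = x


/-! ### Part 1: the real optimisation problem -/

def fsPhi (m c : ℝ) : ℝ := if m ≤ c then m ^ 2 else 2 * m * c - c ^ 2

def fsG (m c : ℝ) : ℝ :=
  if m ≤ c then 3 / 2 * m ^ 2 + m ^ 2 * Real.log (c / m) else 2 * m * c - c ^ 2 / 2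

theorem fs_scalar (q u : ℝ) (hq : 1 ≤ q) (hu : 1 ≤ u) :
    2 * u ^ 2 / q - 2 * u + 1 ≤ Real.exp (2 * (u - q)) := by
  have hq0 : 0 < q := by linarith
  rcases le_total q u with h | h
  · have h1 : 1 + 2 * (u - q) + (2 * (u - q)) ^ 2 / 2 ≤ Real.exp (2 * (u - q)) := by
      have := Real.quadratic_le_exp_of_nonneg (x := 2 * (u - q)) (by linarith)
      linarith
    have h2 : 2 * u ^ 2 / q - 2 * u + 1 = 1 + 2 * (u - q) + 2 * (u - q) ^ 2 / q := by
      field_simp; ring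
    have h3 : 2 * (u - q) ^ 2 / q ≤ 2 * (u - q) ^ 2 := div_le_self (by positivity) hq
    linarith
  · obtain ⟨e, he⟩ : ∃ e, e = q - u := ⟨_, rfl⟩
    have he0 : 0 ≤ e := by linarith
    have h2 : 2 * u ^ 2 / q - 2 * u + 1 = 1 - 2 * e + 2 * e ^ 2 / q := by
      rw [he]; field_simp; ring
    have h3 : 2 * e ^ 2 / q ≤ 2 * e ^ 2 / (1 + e) := by
      apply div_le_div_of_nonneg_left (by positivity) (by positivity) (by linarith)
    have h4 : 1 - 2 * e + 2 * e ^ 2 / (1 + e) = (1 - e) / (1 + e) := by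
      field_simp; ring
    have h5 : (1 - e) / (1 + e) ≤ Real.exp (-(2 * e)) := by
      rcases le_or_gt 1 e with h | h
      · exact (div_nonpos_of_nonpos_of_nonneg (by linarith) (by linarith)).trans (Real.exp_pos _).le
      · rw [div_le_iff₀ (by linarith), ← Real.log_le_log_iff (by linarith) (by positivity),
          Real.log_mul (by positivity) (by positivity), Real.log_exp]
        have h6 := Real.hasSum_log_sub_log_of_abs_lt_one (x := e) (by rw [abs_of_nonneg he0]; exact h)
        have h7 := h6.summable.le_tsum 0 (fun j _ => by positivity)
        rw [h6.tsum_eq] at h7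
        norm_num at h7
        linarith
    have : 2 * (u - q) = -(2 * e) := by rw [he]; ring
    rw [this]; linarith

theorem fsPhi_le (m c : ℝ) : fsPhi m c ≤ m ^ 2 := by
  unfold fsPhi; split_ifs
  · rfl
  · nlinarith [sq_nonneg (m - c)]

theorem fsPhi_sq (m c v : ℝ) (hv : |v| ≤ c) : 2 * m * v - fsPhi m c ≤ v ^ 2 := by
  have h1 := (abs_le.1 hv).2
  unfold fsPhi; split_ifs with h
  · nlinarith [sq_nonneg (m - v)]
  · nlinarith [mul_nonneg (sub_nonneg.2 h1) (by linarith : 0 ≤ 2 * m - c - v)]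

theorem fs_log_bound (p : ℝ) (hp : 0 < p) : (1 - p ^ 2) / 2 ≤ - Real.log p := by
  have := Real.log_le_sub_one_of_pos (x := p ^ 2) (by positivity)
  rw [Real.log_pow] at this
  push_cast at this; linarith

theorem fsG_step (m c b : ℝ) (hm : 0 < m) (hc : 0 < c) (hb : 0 < b) (hb1 : b < 1) :
    (1 - b ^ 2) / 2 * fsPhi m (b * c) ≤ fsG m c - fsG m (b * c) := by
  have hbc : b * c < c := by nlinarith
  have hbc0 : 0 < b * c := by positivity
  have key : ∀ x y : ℝ, 0 < x → x ≤ y → y ≤ m →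
      (1 - (x / y) ^ 2) / 2 * (2 * m * x - x ^ 2) ≤
        (2 * m * y - y ^ 2 / 2) - (2 * m * x - x ^ 2 / 2) := by
    intro x y hx hxy hym
    have hy : 0 < y := by linarith
    have h1 : (1 - (x / y) ^ 2) / 2 ≤ (y - x) / y := by
      have : (y - x) / y - (1 - (x / y) ^ 2) / 2 = (y - x) ^ 2 / (2 * y ^ 2) := by
        field_simp; ring
      have : 0 ≤ (y - x) ^ 2 / (2 * y ^ 2) := by positivity
      linarith
    have h2 : (2 * m * x - x ^ 2) ≤ y * (2 * m - (x + y) / 2) := by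
      nlinarith [mul_nonneg (sub_nonneg.2 hxy) (by linarith : 0 ≤ 2 * m - x - y / 2)]
    have h0 : 0 ≤ 2 * m * x - x ^ 2 := by nlinarith
    have h3 : 0 ≤ (y - x) / y := div_nonneg (by linarith) hy.le
    calc _ ≤ (y - x) / y * (2 * m * x - x ^ 2) := by gcongr
      _ ≤ (y - x) / y * (y * (2 * m - (x + y) / 2)) := by gcongr
      _ = _ := by field_simp; ring
  unfold fsG fsPhi
  rcases le_or_gt m (b * c) with h | h
  · have h' : m ≤ c := by linarith
    rw [if_pos h, if_pos h', if_pos h]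
    have : Real.log (b * c / m) = Real.log b + Real.log (c / m) := by
      rw [mul_div_assoc, Real.log_mul hb.ne' (by positivity)]
    rw [this]
    nlinarith [mul_le_mul_of_nonneg_right (fs_log_bound b hb) (sq_nonneg m)]
  · rw [if_neg (not_le.2 h), if_neg (not_le.2 h)]
    rcases le_or_gt m c with h' | h'
    · rw [if_pos h']
      have k1 := key (b * c) m hbc0 h.le le_rfl
      have hp : 0 < m / c := by positivity
      have k2 := fs_log_bound (m / c) hp
      have k3 : - Real.log (m / c) = Real.log (c / m) := by
        rw [← Real.log_inv, inv_div]
      rw [k3] at k2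
      have hpq : b = (m / c) * (b * c / m) := by field_simp
      obtain ⟨p, hpe⟩ : ∃ p, p = m / c := ⟨_, rfl⟩
      obtain ⟨q, hqe⟩ : ∃ q, q = b * c / m := ⟨_, rfl⟩
      rw [← hpe] at k2
      rw [← hqe] at k1
      have hb' : b ^ 2 = p ^ 2 * q ^ 2 := by rw [hpe, hqe, ← mul_pow, ← hpq]
      have hp1 : p ^ 2 ≤ 1 := by
        rw [hpe]; apply pow_le_one₀ hp.le; rw [div_le_one hc]; exact h'
      have hq1 : q ^ 2 ≤ 1 := by
        rw [hqe]; apply pow_le_one₀ (by positivity); rw [div_le_one hm]; exact h.le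
      rw [hb']
      have hF0 : 0 ≤ 2 * m * (b * c) - (b * c) ^ 2 := by nlinarith
      have hF1 : 2 * m * (b * c) - (b * c) ^ 2 ≤ m ^ 2 := by nlinarith [sq_nonneg (m - b * c)]
      obtain ⟨Φ, hΦ⟩ : ∃ Φ, Φ = 2 * m * (b * c) - (b * c) ^ 2 := ⟨_, rfl⟩
      rw [← hΦ] at hF0 hF1 k1 ⊢
      have e1 : m ^ 2 * ((1 - p ^ 2) / 2) ≤ m ^ 2 * Real.log (c / m) := by gcongr
      have e2 : Φ * ((1 - p ^ 2) / 2) ≤ m ^ 2 * ((1 - p ^ 2) / 2) := by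
        apply mul_le_mul_of_nonneg_right hF1; linarith
      have e3 := mul_nonneg hF0 (mul_nonneg (sub_nonneg.2 hp1) (sub_nonneg.2 hq1))
      nlinarith
    · rw [if_neg (not_le.2 h')]
      have := key (b * c) c hbc0 hbc.le h'.le
      rw [mul_div_assoc, div_self hc.ne', mul_one] at this
      exact this

theorem fsG_nonneg (m c : ℝ) (hm : 0 < m) (hc : 0 < c) : 0 ≤ fsG m c := by
  unfold fsG; split_ifs with h
  · have : 0 ≤ Real.log (c / m) := Real.log_nonneg (by rw [le_div_iff₀ hm]; linarith)
    positivity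
  · nlinarith

theorem fsG_le (m c : ℝ) (hm : 0 < m) (hm1 : m ≤ 1) (hc : 0 < c) (hc1 : c ≤ 1) :
    fsG m c ≤ m ^ 2 * (3 / 2 - Real.log m) := by
  have hl : Real.log m ≤ 0 := Real.log_nonpos hm.le hm1
  unfold fsG; split_ifs with h
  · rw [Real.log_div hc.ne' hm.ne']
    have : Real.log c ≤ 0 := Real.log_nonpos hc.le hc1
    nlinarith [mul_nonneg (sq_nonneg m) (neg_nonneg.2 this)]
  · nlinarith [mul_nonneg (sq_nonneg m) (neg_nonneg.2 hl), sq_nonneg (m - c)]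

theorem fs_sum_phi (m c b : ℝ) (hm : 0 < m) (hc : 0 < c) (hb : 0 < b) (hb1 : b < 1) (N : ℕ) :
    (1 - b ^ 2) / 2 * ∑ k ∈ Finset.range (N + 1), fsPhi m (c * b ^ k) ≤
      (1 - b ^ 2) / 2 * m ^ 2 + fsG m c - fsG m (c * b ^ N) := by
  have hh : 0 ≤ (1 - b ^ 2) / 2 := by nlinarith
  induction N with
  | zero => simp; exact mul_le_mul_of_nonneg_left (fsPhi_le m c) hh
  | succ n ih =>
    rw [Finset.sum_range_succ, mul_add]
    have := fsG_step m (c * b ^ n) b hm (by positivity) hb hb1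
    have e : b * (c * b ^ n) = c * b ^ (n + 1) := by ring
    rw [e] at this
    linarith

theorem fs_core_pos (b c μ : ℝ) (hb : 0 < b) (hb1 : b < 1) (hc : 0 < c) (hc1 : c ≤ 1)
    (hμ : 0 < μ) (hμ1 : μ ≤ 1) (N : ℕ) (v : ℕ → ℝ) (hv : ∀ k, |v k| ≤ c * b ^ k) (y : ℝ)
    (hy : y = (1 - b ^ 2) / 2 * ∑ k ∈ Finset.range N, v k) (hy0 : 0 ≤ y) :
    μ * y ^ 2 - (1 - b ^ 2) / 2 * ∑ k ∈ Finset.range N, v k ^ 2 ≤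
      Real.exp (-2 * (1 / μ - 1)) / 2 + (1 - b ^ 2) / 2 := by
  have hh : 0 ≤ (1 - b ^ 2) / 2 := by nlinarith
  have hE := (Real.exp_pos (-2 * (1 / μ - 1))).le
  have hS : 0 ≤ ∑ k ∈ Finset.range N, v k ^ 2 := Finset.sum_nonneg fun _ _ => sq_nonneg _
  rcases hy0.eq_or_lt with h0 | h0
  · rw [← h0]; nlinarith [mul_nonneg hh hS]
  have hy1 : y ≤ 1 := by
    have h1 : ∑ k ∈ Finset.range N, v k ≤ ∑ k ∈ Finset.range N, b ^ k :=
      Finset.sum_le_sum fun k _ => by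
        have := (abs_le.1 (hv k)).2
        have h2 : c * b ^ k ≤ 1 * b ^ k := by gcongr
        linarith
    have h2 : (1 - b) * ∑ k ∈ Finset.range N, b ^ k ≤ 1 := by
      rw [mul_comm, geom_sum_mul_neg]
      have : 0 < b ^ N := by positivity
      linarith
    have h3 : 0 ≤ ∑ k ∈ Finset.range N, b ^ k := Finset.sum_nonneg fun _ _ => by positivity
    rw [hy]
    calc (1 - b ^ 2) / 2 * ∑ k ∈ Finset.range N, v k
        ≤ (1 - b ^ 2) / 2 * ∑ k ∈ Finset.range N, b ^ k := by gcongr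
      _ = (1 + b) / 2 * ((1 - b) * ∑ k ∈ Finset.range N, b ^ k) := by ring
      _ ≤ 1 * 1 := by
        apply mul_le_mul (by linarith) h2 (mul_nonneg (by linarith) h3) (by norm_num)
      _ = 1 := by norm_num
  obtain ⟨m, ⟨hm0, hm1⟩, hm⟩ : ∃ m ∈ Set.Icc (0 : ℝ) 1, m - m * Real.log m = y := by
    have hcont : ContinuousOn (fun m : ℝ => m - m * Real.log m) (Set.Icc 0 1) :=
      (continuous_id.sub Real.continuous_mul_log).continuousOn
    have := intermediate_value_Icc (by norm_num : (0 : ℝ) ≤ 1) hcont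
    have hm := this (show y ∈ Set.Icc _ _ by simp; exact ⟨h0.le, hy1⟩)
    exact hm
  have hmpos : 0 < m := by
    rcases hm0.eq_or_lt with h | h
    · rw [← h] at hm; simp at hm; linarith
    · exact h
  cases N with
  | zero => simp at hy; linarith
  | succ n =>
  have h1 := fs_sum_phi m c b hmpos hc hb hb1 n
  have h2 := fsG_nonneg m (c * b ^ n) hmpos (by positivity)
  have h3 := fsG_le m c hmpos hm1 hc hc1
  have h4 : 2 * m * ∑ k ∈ Finset.range (n + 1), v k - ∑ k ∈ Finset.range (n + 1), fsPhi m (c * b ^ k)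
      ≤ ∑ k ∈ Finset.range (n + 1), v k ^ 2 := by
    rw [Finset.mul_sum, ← Finset.sum_sub_distrib]
    exact Finset.sum_le_sum fun k _ => fsPhi_sq m _ _ (hv k)
  have h5 := mul_le_mul_of_nonneg_left h4 hh
  have h6 : (1 - b ^ 2) / 2 * (2 * m * ∑ k ∈ Finset.range (n + 1), v k) = 2 * m * y := by
    rw [hy]; ring
  rw [mul_sub, h6] at h5
  obtain ⟨L, hL⟩ : ∃ L, L = Real.log m := ⟨_, rfl⟩
  have hL0 : L ≤ 0 := hL ▸ Real.log_nonpos hm0 hm1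
  rw [← hL] at hm h3
  have hq : 1 ≤ 1 / μ := by rw [le_div_iff₀ hμ]; linarith
  have h7 := fs_scalar (1 / μ) (1 - L) hq (by linarith)
  have h8 : m ^ 2 * Real.exp (2 * (1 - L - 1 / μ)) = Real.exp (-2 * (1 / μ - 1)) := by
    have : m ^ 2 = Real.exp (2 * L) := by
      rw [two_mul, Real.exp_add, hL, Real.exp_log hmpos]; ring
    rw [this, ← Real.exp_add]; congr 1; ring
  have h9 : 2 * (1 - L) ^ 2 / (1 / μ) = 2 * (1 - L) ^ 2 * μ := by field_simp
  rw [h9] at h7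
  have h10 := mul_le_mul_of_nonneg_left h7 (sq_nonneg m)
  rw [h8] at h10
  have h11 : m ^ 2 ≤ 1 := pow_le_one₀ hm0 hm1
  have h12 : (1 - b ^ 2) / 2 * m ^ 2 ≤ (1 - b ^ 2) / 2 * 1 := mul_le_mul_of_nonneg_left h11 hh
  have hy' : y = m * (1 - L) := by rw [← hm]; ring
  have h13 : 2 * m * y = 2 * m ^ 2 * (1 - L) := by rw [hy']; ring
  have h14 : μ * y ^ 2 = μ * m ^ 2 * (1 - L) ^ 2 := by rw [hy']; ring
  rw [h14]; rw [h13] at h5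
  linarith

theorem fs_core (b c μ : ℝ) (hb : 0 < b) (hb1 : b < 1) (hc : 0 < c) (hc1 : c ≤ 1)
    (hμ : 0 < μ) (hμ1 : μ ≤ 1) (N : ℕ) (v : ℕ → ℝ) (hv : ∀ k, |v k| ≤ c * b ^ k) (y : ℝ)
    (hy : y = (1 - b ^ 2) / 2 * ∑ k ∈ Finset.range N, v k) :
    μ * y ^ 2 - (1 - b ^ 2) / 2 * ∑ k ∈ Finset.range N, v k ^ 2 ≤
      Real.exp (-2 * (1 / μ - 1)) / 2 + (1 - b ^ 2) / 2 := by
  rcases le_total 0 y with h | h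
  · exact fs_core_pos b c μ hb hb1 hc hc1 hμ hμ1 N v hv y hy h
  · have := fs_core_pos b c μ hb hb1 hc hc1 hμ hμ1 N (fun k => - v k)
      (fun k => by simpa using hv k) (-y) (by rw [hy, Finset.sum_neg_distrib]; ring) (by linarith)
    simpa using this

/-- The optimisation lemma in complex form. -/
theorem fs_opt (b c μ : ℝ) (hb : 0 < b) (hb1 : b < 1) (hc : 0 < c) (hc1 : c ≤ 1)
    (hμ : 0 < μ) (hμ1 : μ ≤ 1) (N : ℕ) (κ : ℕ → ℂ) (hκ : ∀ k, ‖κ k‖ = 1) :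
    (-(((1 - b ^ 2) / b ^ 2 : ℝ) : ℂ) * ∑ k ∈ Finset.range N, (κ k * ((c * b ^ k : ℝ) : ℂ)) ^ 2 +
      (μ : ℂ) * ((((1 - b ^ 2) / b : ℝ) : ℂ) *
        ∑ k ∈ Finset.range N, κ k * ((c * b ^ k : ℝ) : ℂ)) ^ 2).re ≤
      (1 + 2 * Real.exp (-2 * (1 / μ - 1)) + 2 * (1 - b ^ 2)) / b ^ 2 := by
  have hh : 0 ≤ (1 - b ^ 2) := by nlinarith
  obtain ⟨v, hvdef⟩ : ∃ v : ℕ → ℝ, v = fun k => (κ k).re * (c * b ^ k) := ⟨_, rfl⟩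
  have hv : ∀ k, |v k| ≤ c * b ^ k := fun k => by
    rw [hvdef]; simp only
    rw [abs_mul, abs_of_nonneg (by positivity : 0 ≤ c * b ^ k)]
    have := Complex.abs_re_le_norm (κ k)
    rw [hκ] at this
    exact mul_le_of_le_one_left (by positivity) this
  have hcore := fs_core b c μ hb hb1 hc hc1 hμ hμ1 N v hv _ rfl
  have e1 : (∑ k ∈ Finset.range N, (κ k * ((c * b ^ k : ℝ) : ℂ)) ^ 2).re =
      2 * ∑ k ∈ Finset.range N, v k ^ 2 - c ^ 2 * ∑ k ∈ Finset.range N, (b ^ 2) ^ k := by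
    rw [Complex.re_sum, Finset.mul_sum, Finset.mul_sum, ← Finset.sum_sub_distrib]
    refine Finset.sum_congr rfl fun k _ => ?_
    have h1 : (κ k).re ^ 2 + (κ k).im ^ 2 = 1 := by
      have := Complex.sq_norm (κ k)
      rw [hκ, Complex.normSq_apply] at this; nlinarith
    rw [mul_pow, ← Complex.ofReal_pow, Complex.re_mul_ofReal, sq (κ k), Complex.mul_re, hvdef]
    have h2 : (κ k).im * (κ k).im = 1 - (κ k).re ^ 2 := by linarith
    rw [h2]; ring
  have e2 : (1 - b ^ 2) * (c ^ 2 * ∑ k ∈ Finset.range N, (b ^ 2) ^ k) ≤ 1 := by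
    have h1 : (∑ k ∈ Finset.range N, (b ^ 2) ^ k) * (1 - b ^ 2) ≤ 1 := by
      rw [geom_sum_mul_neg]
      have : 0 < (b ^ 2) ^ N := by positivity
      linarith
    have h2 : c ^ 2 ≤ 1 := pow_le_one₀ hc.le hc1
    have h3 : 0 ≤ (∑ k ∈ Finset.range N, (b ^ 2) ^ k) * (1 - b ^ 2) :=
      mul_nonneg (Finset.sum_nonneg fun _ _ => by positivity) hh
    nlinarith
  obtain ⟨S, hSdef⟩ : ∃ S : ℂ, S = ∑ k ∈ Finset.range N, κ k * ((c * b ^ k : ℝ) : ℂ) := ⟨_, rfl⟩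
  have e3 : S.re = ∑ k ∈ Finset.range N, v k := by
    rw [hSdef, Complex.re_sum]
    refine Finset.sum_congr rfl fun k _ => ?_
    rw [Complex.re_mul_ofReal, hvdef]
  have e4 : (S ^ 2).re ≤ (∑ k ∈ Finset.range N, v k) ^ 2 := by
    rw [← e3, sq, Complex.mul_re]; nlinarith [sq_nonneg S.im]
  rw [← hSdef, ← Complex.ofReal_neg, mul_pow, ← Complex.ofReal_pow, Complex.add_re, Complex.re_ofReal_mul,
    Complex.re_ofReal_mul, Complex.re_ofReal_mul, e1, le_div_iff₀ (by positivity)]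
  have e5 : μ * (1 - b ^ 2) ^ 2 * (S ^ 2).re ≤
      μ * (1 - b ^ 2) ^ 2 * (∑ k ∈ Finset.range N, v k) ^ 2 := by gcongr
  have e6 : (-((1 - b ^ 2) / b ^ 2) *
      (2 * ∑ k ∈ Finset.range N, v k ^ 2 - c ^ 2 * ∑ k ∈ Finset.range N, (b ^ 2) ^ k) +
      μ * (((1 - b ^ 2) / b) ^ 2 * (S ^ 2).re)) * b ^ 2 =
      -(1 - b ^ 2) * (2 * ∑ k ∈ Finset.range N, v k ^ 2) +
      (1 - b ^ 2) * (c ^ 2 * ∑ k ∈ Finset.range N, (b ^ 2) ^ k) +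
      μ * (1 - b ^ 2) ^ 2 * (S ^ 2).re := by
    field_simp; ring
  rw [e6]
  nlinarith

/-! ### Part 2: discrete Loewner steps -/

/-- Bounded univalent functions of the unit disc fixing the origin. -/
structure FSU (f : ℂ → ℂ) : Prop where
  diff : DifferentiableOn ℂ f (ball 0 1)
  maps : MapsTo f (ball 0 1) (ball 0 1)
  inj : InjOn f (ball 0 1)
  zero : f 0 = 0

/-- Third order expansion at the origin. -/
def HasExp (f : ℂ → ℂ) (c a d : ℂ) : Prop :=
  ∃ q : ℂ → ℂ, ContinuousAt q 0 ∧ q 0 = d ∧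
    ∀ᶠ z in nhds (0 : ℂ), f z = c * z + a * z ^ 2 + z ^ 3 * q z

theorem fs_cancel (h : ℂ → ℂ) (hh : ContinuousAt h 0)
    (h0 : ∀ᶠ z in nhds (0 : ℂ), z * h z = 0) : h 0 = 0 ∧ ∀ᶠ z in nhds (0 : ℂ), h z = 0 := by
  have h1 : ∀ᶠ z in nhdsWithin (0 : ℂ) {0}ᶜ, h z = 0 := by
    filter_upwards [nhdsWithin_le_nhds h0, self_mem_nhdsWithin] with z hz hz0
    exact (mul_eq_zero.1 hz).resolve_left hz0
  have h2 : h 0 = 0 := by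
    have t1 : Filter.Tendsto h (nhdsWithin (0 : ℂ) {0}ᶜ) (nhds (h 0)) :=
      hh.tendsto.mono_left nhdsWithin_le_nhds
    have t2 : Filter.Tendsto h (nhdsWithin (0 : ℂ) {0}ᶜ) (nhds 0) :=
      (Filter.tendsto_congr' h1).2 tendsto_const_nhds
    exact tendsto_nhds_unique t1 t2
  refine ⟨h2, ?_⟩
  rw [eventually_nhdsWithin_iff] at h1
  filter_upwards [h1] with z hz
  rcases eq_or_ne z 0 with rfl | hne
  · exact h2
  · exact hz hne

theorem HasExp.unique {f : ℂ → ℂ} {c a d c' a' d' : ℂ} (h : HasExp f c a d)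
    (h' : HasExp f c' a' d') : c = c' ∧ a = a' ∧ d = d' := by
  obtain ⟨q, hq, rfl, he⟩ := h
  obtain ⟨q', hq', rfl, he'⟩ := h'
  have k1 := fs_cancel (fun z => (c - c') + z * ((a - a') + z * (q z - q' z))) (by fun_prop) (by
    filter_upwards [he, he'] with z h1 h2
    rw [h1] at h2
    linear_combination h2)
  have hc : c = c' := by have := k1.1; simp at this; linear_combination this
  have k2 := fs_cancel (fun z => ((a - a') + z * (q z - q' z))) (by fun_prop) (by
    filter_upwards [k1.2] with z h1
    rw [hc] at h1
    linear_combination h1)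
  have ha : a = a' := by have := k2.1; simp at this; linear_combination this
  have k3 := fs_cancel (fun z => ((q z - q' z))) (by fun_prop) (by
    filter_upwards [k2.2] with z h1
    rw [ha] at h1
    linear_combination h1)
  exact ⟨hc, ha, sub_eq_zero.1 k3.1⟩

theorem fs_dslope_diff {f : ℂ → ℂ} (hf : DifferentiableOn ℂ f (ball 0 1)) :
    DifferentiableOn ℂ (dslope f 0) (ball 0 1) :=
  (Complex.differentiableOn_dslope (ball_mem_nhds 0 one_pos)).2 hf

theorem fs_dslope_eq (f : ℂ → ℂ) (z : ℂ) : f z = f 0 + z * dslope f 0 z := by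
  have := sub_smul_dslope f 0 z
  simp only [sub_zero, smul_eq_mul] at this
  rw [this]; ring

theorem hasExp_dslope {f : ℂ → ℂ} (hf : DifferentiableOn ℂ f (ball 0 1)) (h0 : f 0 = 0) :
    HasExp f (deriv f 0) (deriv (dslope f 0) 0) (deriv (dslope (dslope f 0) 0) 0) := by
  have h3 := fs_dslope_diff (fs_dslope_diff (fs_dslope_diff hf))
  refine ⟨dslope (dslope (dslope f 0) 0) 0,
    h3.continuousOn.continuousAt (ball_mem_nhds 0 one_pos), dslope_same _ _, ?_⟩
  refine Filter.Eventually.of_forall fun z => ?_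
  have e1 := fs_dslope_eq f z
  have e2 := fs_dslope_eq (dslope f 0) z
  have e3 := fs_dslope_eq (dslope (dslope f 0) 0) z
  rw [dslope_same] at e2 e3
  rw [e1, e2, e3, h0]; ring

theorem HasExp.deriv_eq {f : ℂ → ℂ} {c a d : ℂ} (h : HasExp f c a d)
    (hf : DifferentiableOn ℂ f (ball 0 1)) (h0 : f 0 = 0) : deriv f 0 = c :=
  ((hasExp_dslope hf h0).unique h).1

/-- Smallness of the initial coefficients. -/
theorem fs_initial {f : ℂ → ℂ} (hf : FSU f) {c M : ℝ} {a d : ℂ} (h : HasExp f (c : ℂ) a d)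
    (hM : 0 < M) (hcM : 1 - c ≤ M) : ‖a‖ ≤ 4 * M ∧ ‖d‖ ≤ 16 * M := by
  obtain ⟨e1, e2, e3⟩ := (hasExp_dslope hf.diff hf.zero).unique h
  have hmaps : MapsTo f (ball 0 1) (closedBall (f 0) 1) := by
    rw [hf.zero]; exact hf.maps.mono_right ball_subset_closedBall
  set H : ℂ → ℂ := fun z => dslope f 0 z - c with hH
  have hHd : DifferentiableOn ℂ H (ball 0 1) := (fs_dslope_diff hf.diff).sub_const _
  have hH0 : H 0 = 0 := by simp [hH, dslope_same, e1]
  have hHre : MapsTo H (ball 0 1) {z | z.re ≤ M} := by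
    intro z hz
    have := Complex.norm_dslope_le_div_of_mapsTo_ball hf.diff hmaps hz
    have h2 := Complex.re_le_norm (dslope f 0 z)
    simp [hH]; linarith
  have hHb : ∀ z ∈ ball (0 : ℂ) (1 / 2), ‖H z‖ ≤ 2 * M := by
    intro z hz
    rw [mem_ball_zero_iff] at hz
    have := Complex.borelCaratheodory_zero hM hHd hHre one_pos
      (z := z) (by rw [mem_ball_zero_iff]; linarith) hH0
    refine this.trans ?_
    rw [div_le_iff₀ (by linarith)]
    nlinarith
  have hds : dslope (dslope f 0) 0 = dslope H 0 := by
    ext z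
    rcases eq_or_ne z 0 with rfl | hz
    · simp [hH, dslope_same]
    · rw [dslope_of_ne _ hz, dslope_of_ne _ hz, slope_def_field, slope_def_field]; simp [hH]
  have sub : ball (0 : ℂ) (1 / 2) ⊆ ball 0 1 := ball_subset_ball (by norm_num)
  have hq2 : ∀ z ∈ ball (0 : ℂ) (1 / 2), ‖dslope (dslope f 0) 0 z‖ ≤ 4 * M := by
    intro z hz
    rw [hds]
    have := Complex.norm_dslope_le_div_of_mapsTo_ball (R₂ := 2 * M) (hHd.mono sub)
      (fun w hw => by rw [hH0, mem_closedBall_zero_iff]; exact hHb w hw) hz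
    refine this.trans (le_of_eq (by ring))
  have z0 : (0 : ℂ) ∈ ball (0 : ℂ) (1 / 2) := mem_ball_self (by norm_num)
  constructor
  · have := hq2 0 z0
    rwa [dslope_same, e2] at this
  · have := Complex.norm_dslope_le_div_of_mapsTo_ball (R₂ := 8 * M) (f := dslope (dslope f 0) 0)
      ((fs_dslope_diff (fs_dslope_diff hf.diff)).mono sub)
      (fun w hw => by
        rw [mem_closedBall, dist_eq_norm]
        have h1 := hq2 w hw
        have h2 := hq2 0 z0
        exact (norm_sub_le _ _).trans (by linarith)) z0
    rw [dslope_same, e3] at this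
    refine this.trans (le_of_eq (by ring))

/-- If `the derivative at 0 has modulus less than r` then `f` omits a value on the circle of radius `r`. -/
theorem fs_omit {f : ℂ → ℂ} (hf : FSU f) {r : ℝ} (hr : 0 < r)
    (hc0 : deriv f 0 ≠ 0) (hc : ‖deriv f 0‖ < r) :
    ∃ w : ℂ, ‖w‖ = r ∧ ∀ z ∈ ball (0 : ℂ) 1, f z ≠ w := by
  by_contra! hcon
  have hopen : ∀ s ⊆ ball (0 : ℂ) 1, IsOpen s → IsOpen (f '' s) := by
    rcases (hf.diff.analyticOnNhd isOpen_ball).is_constant_or_isOpen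
      (convex_ball 0 1).isPreconnected with ⟨w, hw⟩ | h
    · exfalso
      have h1 : (0 : ℂ) ∈ ball (0 : ℂ) 1 := by simp
      have h2 : (1 / 2 : ℂ) ∈ ball (0 : ℂ) 1 := by simp; norm_num
      have := hf.inj h1 h2 ((hw _ h1).trans (hw _ h2).symm)
      norm_num at this
    · exact h
  obtain ⟨n, hn⟩ := (isCompact_sphere (0 : ℂ) r).elim_directed_cover
    (fun n : ℕ => f '' ball 0 (1 - 1 / ((n : ℝ) + 2)))
    (fun n => hopen _ (ball_subset_ball (by
      have : 0 < 1 / ((n : ℝ) + 2) := by positivity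
      linarith)) isOpen_ball)
    (by
      intro w hw
      rw [mem_sphere_zero_iff_norm] at hw
      obtain ⟨z, hz, hzw⟩ := hcon w hw
      rw [mem_ball_zero_iff] at hz
      obtain ⟨n, hn⟩ := exists_nat_one_div_lt (sub_pos.2 hz)
      refine mem_iUnion.2 ⟨n, z, ?_, hzw⟩
      rw [mem_ball_zero_iff]
      have : 1 / ((n : ℝ) + 2) ≤ 1 / ((n : ℝ) + 1) := by gcongr; norm_num
      linarith)
    (Monotone.directed_le (fun i j hij => image_mono (ball_subset_ball (by
      have : (i : ℝ) ≤ j := by exact_mod_cast hij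
      gcongr))))
  set ρ : ℝ := 1 - 1 / ((n : ℝ) + 2) with hρ
  have hρ1 : ρ < 1 := by
    have : 0 < 1 / ((n : ℝ) + 2) := by positivity
    linarith
  have hρ0 : 0 < ρ := by
    have : 1 / ((n : ℝ) + 2) ≤ 1 / 2 := by gcongr; linarith [Nat.cast_nonneg (α := ℝ) n]
    linarith
  have hsub : closedBall (0 : ℂ) ρ ⊆ ball 0 1 := closedBall_subset_ball hρ1
  have hne : ∀ z ∈ sphere (0 : ℂ) ρ, ‖f z‖ ≠ r := by
    intro z hz hfz
    obtain ⟨z', hz', he⟩ := hn (mem_sphere_zero_iff_norm.2 hfz)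
    have : z' = z := hf.inj (hsub (ball_subset_closedBall hz')) (hsub (sphere_subset_closedBall hz)) he
    rw [this, mem_ball_zero_iff] at hz'
    rw [mem_sphere_zero_iff_norm] at hz
    linarith
  have hcont : ContinuousOn (fun z => ‖f z‖) (sphere 0 ρ) :=
    (hf.diff.continuousOn.mono (sphere_subset_closedBall.trans hsub)).norm
  have hpre : IsPreconnected (sphere (0 : ℂ) ρ) :=
    (isConnected_sphere (by simp [Complex.rank_real_complex]) 0 hρ0.le).isPreconnected
  have hρs : (ρ : ℂ) ∈ sphere (0 : ℂ) ρ := by simp [abs_of_pos hρ0]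
  have hcl : closure (ball (0 : ℂ) ρ) = closedBall 0 ρ := closure_ball _ hρ0.ne'
  have hfr : frontier (ball (0 : ℂ) ρ) = sphere 0 ρ := frontier_ball _ hρ0.ne'
  have hdich : (∀ z ∈ sphere (0 : ℂ) ρ, ‖f z‖ < r) ∨ (∀ z ∈ sphere (0 : ℂ) ρ, r < ‖f z‖) := by
    by_contra! hh
    obtain ⟨⟨z1, hz1, h1⟩, ⟨z2, hz2, h2⟩⟩ := hh
    have := hpre.intermediate_value hz2 hz1 hcont ⟨h2, h1⟩
    obtain ⟨z, hz, hzr⟩ := this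
    exact hne z hz hzr
  have hfd : DiffContOnCl ℂ f (ball 0 ρ) := by
    apply DifferentiableOn.diffContOnCl; rw [hcl]; exact hf.diff.mono hsub
  rcases hdich with hlt | hgt
  · obtain ⟨z0, hz0, hmax⟩ := (isCompact_sphere (0 : ℂ) ρ).exists_isMaxOn ⟨_, hρs⟩ hcont
    obtain ⟨z, hz, hzr⟩ := hn (show (r : ℂ) ∈ sphere 0 r by simp [abs_of_pos hr])
    have := Complex.norm_le_of_forall_mem_frontier_norm_le isBounded_ball hfd
      (C := ‖f z0‖) (fun w hw => by rw [hfr] at hw; exact hmax hw) (subset_closure hz)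
    rw [hzr] at this
    simp [abs_of_pos hr] at this
    linarith [hlt z0 hz0]
  · have hds : ∀ z ∈ ball (0 : ℂ) 1, dslope f 0 z ≠ 0 := by
      intro z hz h0
      rcases eq_or_ne z 0 with rfl | hz0
      · rw [dslope_same] at h0; exact hc0 h0
      · have := fs_dslope_eq f z
        rw [h0, mul_zero, add_zero] at this
        exact hz0 (hf.inj hz (mem_ball_self one_pos) this)
    have hd : DiffContOnCl ℂ (fun z => (dslope f 0 z)⁻¹) (ball 0 ρ) := by
      apply DifferentiableOn.diffContOnCl; rw [hcl]
      exact ((fs_dslope_diff hf.diff).inv hds).mono hsub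
    have := Complex.norm_le_of_forall_mem_frontier_norm_le isBounded_ball hd
      (C := 1 / r) (fun w hw => by
        rw [hfr] at hw
        have h1 := hgt w hw
        have h2 := fs_dslope_eq f w
        rw [hf.zero, zero_add] at h2
        rw [mem_sphere_zero_iff_norm] at hw
        rw [h2, norm_mul, hw] at h1
        rw [norm_inv, inv_eq_one_div]
        apply one_div_le_one_div_of_le hr
        nlinarith [norm_nonneg (dslope f 0 w)]) (subset_closure (mem_ball_self hρ0))
    rw [dslope_same, norm_inv, inv_eq_one_div] at this
    have hpos : 0 < ‖deriv f 0‖ := norm_pos_iff.2 hc0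
    rw [one_div_le_one_div hpos hr] at this
    linarith

theorem fs_sqrt {q : ℂ → ℂ} (hq : DifferentiableOn ℂ q (ball 0 1))
    (h0 : ∀ z ∈ ball (0 : ℂ) 1, q z ≠ 0) :
    ∃ S : ℂ → ℂ, DifferentiableOn ℂ S (ball 0 1) ∧ ∀ z ∈ ball (0 : ℂ) 1, S z ^ 2 = q z := by
  have hd : DifferentiableOn ℂ (fun z => deriv q z / q z) (ball 0 1) :=
    (hq.deriv isOpen_ball).div hq h0
  obtain ⟨L, hL⟩ := hd.isExactOn_ball
  have hq' : ∀ z ∈ ball (0 : ℂ) 1, HasDerivAt q (deriv q z) z := fun z hz =>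
    (hq.differentiableAt (isOpen_ball.mem_nhds hz)).hasDerivAt
  have hk : ∀ z ∈ ball (0 : ℂ) 1, HasDerivAt (fun z => Complex.exp (-L z) * q z) 0 z := by
    intro z hz
    have := ((hL z hz).neg.cexp).mul (hq' z hz)
    convert! this using 1
    have := h0 z hz
    field_simp; ring
  have hconst : ∀ z ∈ ball (0 : ℂ) 1, Complex.exp (-L z) * q z = Complex.exp (-L 0) * q 0 := by
    intro z hz
    exact isOpen_ball.is_const_of_deriv_eq_zero (convex_ball (0 : ℂ) 1).isPreconnected
      (fun w hw => (hk w hw).differentiableAt.differentiableWithinAt)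
      (fun w hw => (hk w hw).deriv) hz (mem_ball_self one_pos)
  obtain ⟨s0, hs0⟩ := IsAlgClosed.exists_pow_nat_eq (Complex.exp (-L 0) * q 0) (n := 2) two_pos
  refine ⟨fun z => s0 * Complex.exp (L z / 2), ?_, ?_⟩
  · intro z hz
    exact (((hL z hz).differentiableAt.div_const 2).cexp.const_mul s0).differentiableWithinAt
  · intro z hz
    rw [mul_pow, hs0, ← hconst z hz, ← Complex.exp_nat_mul]
    have : ((2 : ℕ) : ℂ) * (L z / 2) = L z := by push_cast; ring
    rw [this, mul_right_comm, ← Complex.exp_add]; simp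

theorem fs_mobius_denom {s t : ℂ} (hs : ‖s‖ < 1) (ht : ‖t‖ < 1) :
    1 - (starRingEnd ℂ) s * t ≠ 0 := by
  intro h
  have h1 : (starRingEnd ℂ) s * t = 1 := by linear_combination -h
  have h2 : ‖(starRingEnd ℂ) s * t‖ = 1 := by rw [h1]; simp
  rw [norm_mul, RCLike.norm_conj] at h2
  nlinarith [norm_nonneg s, norm_nonneg t]

theorem fs_mobius_lt {s t : ℂ} (hs : ‖s‖ < 1) (ht : ‖t‖ < 1) :
    ‖(s - t) / (1 - (starRingEnd ℂ) s * t)‖ < 1 := by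
  have hd := fs_mobius_denom hs ht
  rw [norm_div, div_lt_one (norm_pos_iff.2 hd)]
  rw [← sq_lt_sq₀ (norm_nonneg _) (norm_nonneg _), Complex.sq_norm, Complex.sq_norm]
  have h1 : Complex.normSq s < 1 := by rw [← Complex.sq_norm]; nlinarith [norm_nonneg s]
  have h2 : Complex.normSq t < 1 := by rw [← Complex.sq_norm]; nlinarith [norm_nonneg t]
  rw [Complex.normSq_apply] at h1 h2
  simp only [Complex.normSq_apply, Complex.sub_re, Complex.sub_im, Complex.mul_re, Complex.mul_im,
    Complex.one_re, Complex.one_im, Complex.conj_re, Complex.conj_im]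
  nlinarith [mul_pos (sub_pos.2 h1) (sub_pos.2 h2)]

/-- One Koebe step. -/
theorem fs_step {f : ℂ → ℂ} (hf : FSU f) {r b : ℝ} (hr : 0 < r) (hr1 : r < 1)
    (hb : b = 2 * √r / (1 + r)) {w : ℂ} (hw : ‖w‖ = r) (hom : ∀ z ∈ ball (0 : ℂ) 1, f z ≠ w) :
    ∃ (κ : ℂ) (g : ℂ → ℂ), ‖κ‖ = 1 ∧ FSU g ∧
      ∀ z ∈ ball (0 : ℂ) 1, f z * (1 - b * κ * g z) = g z * (b - κ * g z) := by
  have hw1 : ‖w‖ < 1 := by rw [hw]; exact hr1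
  have hfz : ∀ z ∈ ball (0 : ℂ) 1, ‖f z‖ < 1 := fun z hz => mem_ball_zero_iff.1 (hf.maps hz)
  have hqd : DifferentiableOn ℂ (fun z => (w - f z) / (1 - (starRingEnd ℂ) w * f z)) (ball 0 1) :=
    ((differentiableOn_const w).sub hf.diff).div
      ((differentiableOn_const 1).sub (hf.diff.const_mul _))
      (fun z hz => fs_mobius_denom hw1 (hfz z hz))
  obtain ⟨S, hSd, hS⟩ := fs_sqrt hqd (fun z hz => div_ne_zero
    (sub_ne_zero.2 (hom z hz).symm) (fs_mobius_denom hw1 (hfz z hz)))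
  have h0m : (0 : ℂ) ∈ ball (0 : ℂ) 1 := mem_ball_self one_pos
  obtain ⟨σ, hσ⟩ : ∃ σ, σ = S 0 := ⟨_, rfl⟩
  have hσw : σ ^ 2 = w := by rw [hσ, hS 0 h0m, hf.zero]; simp
  have hσn : ‖σ‖ ^ 2 = r := by rw [← norm_pow, hσw, hw]
  have hσr : ‖σ‖ = √r := by rw [← hσn, Real.sqrt_sq (norm_nonneg _)]
  have hσ1 : ‖σ‖ < 1 := by nlinarith [norm_nonneg σ]
  have hσ0 : σ ≠ 0 := by
    intro h; rw [h] at hσn; simp at hσn; linarith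
  have hσc : (starRingEnd ℂ) σ * σ = (r : ℂ) := by
    rw [mul_comm, Complex.mul_conj, ← Complex.sq_norm, hσn]
  have hSz : ∀ z ∈ ball (0 : ℂ) 1, ‖S z‖ < 1 := by
    intro z hz
    have h1 : ‖S z‖ ^ 2 < 1 := by
      rw [← norm_pow, hS z hz]; exact fs_mobius_lt hw1 (hfz z hz)
    nlinarith [norm_nonneg (S z)]
  have hsr : (√r : ℂ) ≠ 0 := by
    simpa using (Real.sqrt_pos.2 hr).ne'
  obtain ⟨η, hη⟩ : ∃ η : ℂ, η = σ / (√r : ℂ) := ⟨_, rfl⟩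
  have hη1 : ‖η‖ = 1 := by
    rw [hη, norm_div, hσr, Complex.norm_real, Real.norm_eq_abs, abs_of_nonneg (Real.sqrt_nonneg r),
      div_self (Real.sqrt_pos.2 hr).ne']
  have hη0 : η ≠ 0 := by intro h; rw [h] at hη1; simp at hη1
  have hση : σ = η * √r := by rw [hη]; field_simp
  have hcη : (starRingEnd ℂ) η * η = 1 := by
    rw [mul_comm, Complex.mul_conj, ← Complex.sq_norm, hη1]; norm_num
  have hcσ : (starRingEnd ℂ) σ = η⁻¹ * √r := by
    rw [hση, map_mul, Complex.conj_ofReal]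
    congr 1
    field_simp; exact hcη
  have hss : (√r : ℂ) ^ 2 = r := by rw [← Complex.ofReal_pow, Real.sq_sqrt hr.le]
  obtain ⟨G, hG⟩ : ∃ G : ℂ → ℂ, G = fun z => (σ - S z) / (1 - (starRingEnd ℂ) σ * S z) := ⟨_, rfl⟩
  have hGlt : ∀ z ∈ ball (0 : ℂ) 1, ‖G z‖ < 1 := fun z hz => by
    rw [hG]; exact fs_mobius_lt hσ1 (hSz z hz)
  have hSG : ∀ z ∈ ball (0 : ℂ) 1, S z * (1 - (starRingEnd ℂ) σ * G z) = σ - G z := by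
    intro z hz
    have hd := fs_mobius_denom hσ1 (hSz z hz)
    have hGz : G z * (1 - (starRingEnd ℂ) σ * S z) = σ - S z := by
      rw [hG]; exact div_mul_cancel₀ _ hd
    linear_combination hGz
  have hmain : ∀ z ∈ ball (0 : ℂ) 1,
      f z * ((1 + r) - 2 * (starRingEnd ℂ) σ * G z) = G z * (2 * σ - (1 + r) * G z) := by
    intro z hz
    have h1 := hS z hz
    rw [eq_div_iff (fs_mobius_denom hw1 (hfz z hz))] at h1
    have hcw : (starRingEnd ℂ) w = (starRingEnd ℂ) σ ^ 2 := by rw [← hσw, map_pow]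
    rw [hcw, ← hσw] at h1
    have h2 := hSG z hz
    have h3 : (σ - G z) ^ 2 * (1 - (starRingEnd ℂ) σ ^ 2 * f z) =
        (σ ^ 2 - f z) * (1 - (starRingEnd ℂ) σ * G z) ^ 2 := by
      rw [← h1, ← h2]; ring
    have hr1' : (1 - (r : ℂ)) ≠ 0 := by
      rw [← Complex.ofReal_one, ← Complex.ofReal_sub]; exact_mod_cast (sub_pos.2 hr1).ne'
    apply mul_left_cancel₀ hr1'
    obtain ⟨τ, hτ⟩ : ∃ τ, τ = (starRingEnd ℂ) σ := ⟨_, rfl⟩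
    rw [← hτ] at h3 hσc ⊢
    have hr' : (r : ℂ) = τ * σ := hσc.symm
    rw [hr']
    linear_combination h3
  refine ⟨(η⁻¹) ^ 2, fun z => η * G z, by rw [norm_pow, norm_inv, hη1]; norm_num, ?_, ?_⟩
  · refine ⟨?_, ?_, ?_, ?_⟩
    · rw [hG]
      exact (((differentiableOn_const σ).sub hSd).div
        ((differentiableOn_const 1).sub (hSd.const_mul _))
        (fun z hz => fs_mobius_denom hσ1 (hSz z hz))).const_mul η
    · intro z hz
      rw [mem_ball_zero_iff, norm_mul, hη1, one_mul]; exact hGlt z hz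
    · intro z hz z' hz' h
      have hGG : G z = G z' := mul_left_cancel₀ hη0 h
      apply hf.inj hz hz'
      have m1 := hmain z hz
      have m2 := hmain z' hz'
      rw [hGG] at m1
      have hne : ((1 + r) - 2 * (starRingEnd ℂ) σ * G z') ≠ 0 := by
        intro h0
        have h1 : (1 + (r : ℂ)) = 2 * (starRingEnd ℂ) σ * G z' := by linear_combination h0
        have h2 : ‖(1 + (r : ℂ))‖ = 1 + r := by
          rw [← Complex.ofReal_one, ← Complex.ofReal_add, Complex.norm_real, Real.norm_eq_abs,
            abs_of_pos (by linarith)]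
        rw [h1, norm_mul, norm_mul, RCLike.norm_conj, Complex.norm_ofNat] at h2
        have h3 := hGlt z' hz'
        have hσp : 0 < ‖σ‖ := norm_pos_iff.2 hσ0
        nlinarith [sq_nonneg (1 - ‖σ‖)]
      exact mul_right_cancel₀ hne (m1.trans m2.symm)
    · rw [hG]; simp [hσ]
  · intro z hz
    have m1 := hmain z hz
    have h1r : (1 + (r : ℂ)) ≠ 0 := by
      rw [← Complex.ofReal_one, ← Complex.ofReal_add]; exact_mod_cast (by linarith : 1 + r ≠ 0)
    rw [hcσ, hση] at m1
    have hbC : (b : ℂ) = 2 * √r / (1 + r) := by rw [hb]; push_cast; ring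
    rw [hbC]
    apply mul_left_cancel₀ h1r
    have i1 : η⁻¹ ^ 2 * η = η⁻¹ := by field_simp
    have i2 : η * η⁻¹ = 1 := mul_inv_cancel₀ hη0
    field_simp
    field_simp at m1
    linear_combination m1

/-! ### Part 3: coefficient chain and the Fekete–Szegő inequality on the disc -/

theorem fs_coeff {f g : ℂ → ℂ} {b κ c a d : ℂ} (hg : HasExp g c a d)
    (h : ∀ᶠ z in nhds (0 : ℂ), f z * (1 - b * κ * g z) = g z * (b - κ * g z)) :
    HasExp f (b * c) (b * a - (1 - b ^ 2) * κ * c ^ 2)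
      (b * d - 2 * (1 - b ^ 2) * κ * c * a - (1 - b ^ 2) * b * κ ^ 2 * c ^ 3) := by
  obtain ⟨q, hq, rfl, he⟩ := hg
  have hc1 : ContinuousAt (fun z => 1 - b * κ * (z * (c + a * z + z ^ 2 * q z))) 0 := by fun_prop
  have hne0 : (fun z => 1 - b * κ * (z * (c + a * z + z ^ 2 * q z))) 0 ≠ 0 := by simp
  have hne := hc1.eventually_ne hne0
  refine ⟨fun z => b * q z - (1 - b ^ 2) * κ * (2 * a * c + z * (a ^ 2 + 2 * c * q z + 2 * a * z * q z
      + z ^ 2 * q z ^ 2)) - (1 - b ^ 2) * b * κ ^ 2 * (c + a * z + z ^ 2 * q z) ^ 3 /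
      (1 - b * κ * (z * (c + a * z + z ^ 2 * q z))), ?_, ?_, ?_⟩
  · refine ContinuousAt.sub (by fun_prop) (ContinuousAt.div (by fun_prop) hc1 hne0)
  · simp; ring
  · filter_upwards [h, he, hne] with z h1 h2 h3
    have h4 : g z = z * (c + a * z + z ^ 2 * q z) := by rw [h2]; ring
    rw [h4] at h1
    obtain ⟨D, hD⟩ : ∃ D, D = 1 - b * κ * (z * (c + a * z + z ^ 2 * q z)) := ⟨_, rfl⟩
    rw [← hD] at h1 h3 ⊢
    apply mul_right_cancel₀ h3
    rw [h1]
    have e : (1 - b ^ 2) * b * κ ^ 2 * (c + a * z + z ^ 2 * q z) ^ 3 / D * D =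
      (1 - b ^ 2) * b * κ ^ 2 * (c + a * z + z ^ 2 * q z) ^ 3 := div_mul_cancel₀ _ h3
    have : (b * c * z + (b * a - (1 - b ^ 2) * κ * c ^ 2) * z ^ 2 +
          z ^ 3 *
            (b * q z -
                (1 - b ^ 2) * κ *
                  (2 * a * c + z * (a ^ 2 + 2 * c * q z + 2 * a * z * q z + z ^ 2 * q z ^ 2)) -
              (1 - b ^ 2) * b * κ ^ 2 * (c + a * z + z ^ 2 * q z) ^ 3 / D)) * D =
        (b * c * z + (b * a - (1 - b ^ 2) * κ * c ^ 2) * z ^ 2 +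
          z ^ 3 *
            (b * q z -
                (1 - b ^ 2) * κ *
                  (2 * a * c + z * (a ^ 2 + 2 * c * q z + 2 * a * z * q z + z ^ 2 * q z ^ 2)))) * D
        - z ^ 3 * ((1 - b ^ 2) * b * κ ^ 2 * (c + a * z + z ^ 2 * q z) ^ 3) := by
      linear_combination (-z ^ 3) * e
    rw [this, hD]; ring

theorem fs_b_lt {r b : ℝ} (hr : 0 < r) (hr1 : r < 1) (hb : b = 2 * √r / (1 + r)) :
    0 < b ∧ b < 1 := by
  have h1 : 0 < √r := Real.sqrt_pos.2 hr
  have h2 : √r ^ 2 = r := Real.sq_sqrt hr.le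
  have h3 : √r < 1 := by nlinarith
  constructor
  · rw [hb]; positivity
  · rw [hb, div_lt_one (by linarith)]
    nlinarith [sq_pos_of_pos (sub_pos.2 h3)]

theorem fs_chain {r b : ℝ} (hr : 0 < r) (hr1 : r < 1) (hb : b = 2 * √r / (1 + r)) (n : ℕ) :
    ∀ (f : ℂ → ℂ), FSU f → ∀ c : ℝ, 0 < c → r * b ^ n ≤ c → ∀ a d : ℂ, HasExp f (c : ℂ) a d →
      ∃ (N : ℕ) (κ : ℕ → ℂ) (c0 : ℝ) (g : ℂ → ℂ) (a0 d0 : ℂ), (∀ k, ‖κ k‖ = 1) ∧ r ≤ c0 ∧ c0 ≤ 1 ∧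
        FSU g ∧ HasExp g (c0 : ℂ) a0 d0 ∧ c = c0 * b ^ N ∧
        a / c = a0 / c0 - (((1 - b ^ 2) / b : ℝ) : ℂ) *
          ∑ k ∈ Finset.range N, κ k * ((c0 * b ^ k : ℝ) : ℂ) ∧
        d / c - (a / c) ^ 2 = d0 / c0 - (a0 / c0) ^ 2 - (((1 - b ^ 2) / b ^ 2 : ℝ) : ℂ) *
          ∑ k ∈ Finset.range N, (κ k * ((c0 * b ^ k : ℝ) : ℂ)) ^ 2 := by
  obtain ⟨hb0, hb1⟩ := fs_b_lt hr hr1 hb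
  have hbC : (b : ℂ) ≠ 0 := by exact_mod_cast hb0.ne'
  have base : ∀ (f : ℂ → ℂ), FSU f → ∀ c : ℝ, 0 < c → r ≤ c → ∀ a d : ℂ, HasExp f (c : ℂ) a d →
      ∃ (N : ℕ) (κ : ℕ → ℂ) (c0 : ℝ) (g : ℂ → ℂ) (a0 d0 : ℂ), (∀ k, ‖κ k‖ = 1) ∧ r ≤ c0 ∧ c0 ≤ 1 ∧
        FSU g ∧ HasExp g (c0 : ℂ) a0 d0 ∧ c = c0 * b ^ N ∧
        a / c = a0 / c0 - (((1 - b ^ 2) / b : ℝ) : ℂ) *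
          ∑ k ∈ Finset.range N, κ k * ((c0 * b ^ k : ℝ) : ℂ) ∧
        d / c - (a / c) ^ 2 = d0 / c0 - (a0 / c0) ^ 2 - (((1 - b ^ 2) / b ^ 2 : ℝ) : ℂ) *
          ∑ k ∈ Finset.range N, (κ k * ((c0 * b ^ k : ℝ) : ℂ)) ^ 2 := by
    intro f hf c hc hrc a d he
    have hle : c ≤ 1 := by
      have h1 := he.deriv_eq hf.diff hf.zero
      have h2 := Complex.norm_deriv_le_one_of_mapsTo_ball (f := f) (c := 0) (R := 1) hf.diff
        (by rw [hf.zero]; exact hf.maps.mono_right ball_subset_closedBall) one_pos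
      rw [h1, Complex.norm_real, Real.norm_eq_abs, abs_of_pos hc] at h2
      exact h2
    exact ⟨0, fun _ => 1, c, f, a, d, by simp, hrc, hle, hf, he, by simp, by simp, by simp⟩
  induction n with
  | zero =>
    intro f hf c hc hrc
    exact base f hf c hc (by simpa using hrc)
  | succ n ih =>
    intro f hf c hc hrc a d he
    rcases le_or_gt r c with h | h
    · exact base f hf c hc h a d he
    have hd := he.deriv_eq hf.diff hf.zero
    have hcC : (c : ℂ) ≠ 0 := by exact_mod_cast hc.ne'
    obtain ⟨w, hw, hom⟩ := fs_omit hf hr (by rw [hd]; exact hcC)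
      (by rw [hd, Complex.norm_real, Real.norm_eq_abs, abs_of_pos hc]; exact h)
    obtain ⟨κ, g, hκ, hg, hfg⟩ := fs_step hf hr hr1 hb hw hom
    have heg := hasExp_dslope hg.diff hg.zero
    obtain ⟨cg, hcg⟩ : ∃ x, x = deriv g 0 := ⟨_, rfl⟩
    obtain ⟨ag, hag⟩ : ∃ x, x = deriv (dslope g 0) 0 := ⟨_, rfl⟩
    obtain ⟨dg, hdg⟩ : ∃ x, x = deriv (dslope (dslope g 0) 0) 0 := ⟨_, rfl⟩
    rw [← hcg, ← hag, ← hdg] at heg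
    have hef := fs_coeff heg (Filter.eventually_of_mem (ball_mem_nhds 0 one_pos) hfg)
    obtain ⟨e1, e2, e3⟩ := he.unique hef
    have hcg' : cg = ((c / b : ℝ) : ℂ) := by push_cast; rw [e1]; field_simp
    rw [hcg'] at heg
    have hcb : 0 < c / b := div_pos hc hb0
    obtain ⟨N, κ0, c0, g0, a0, d0, hκ0, h1, h2, h3, h4, h5, h6, h7⟩ := ih g hg (c / b) hcb (by
      rw [le_div_iff₀ hb0, mul_assoc, ← pow_succ]; exact hrc) ag dg heg
    rw [← hcg'] at h6 h7
    have hcg0 : cg ≠ 0 := by rw [hcg']; exact_mod_cast hcb.ne'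
    refine ⟨N + 1, Function.update κ0 N κ, c0, g0, a0, d0, ?_, h1, h2, h3, h4, ?_, ?_, ?_⟩
    · intro k
      rcases eq_or_ne k N with rfl | hk
      · simpa using hκ
      · rw [Function.update_of_ne hk]; exact hκ0 k
    · rw [pow_succ, ← mul_assoc, ← h5]; field_simp
    · rw [Finset.sum_range_succ, Function.update_self, ← h5, ← hcg']
      have : ∑ k ∈ Finset.range N, Function.update κ0 N κ k * ((c0 * b ^ k : ℝ) : ℂ) =
          ∑ k ∈ Finset.range N, κ0 k * ((c0 * b ^ k : ℝ) : ℂ) :=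
        Finset.sum_congr rfl fun k hk => by
          rw [Function.update_of_ne (Finset.mem_range.1 hk).ne]
      rw [this, mul_add, ← sub_sub, ← h6, e1, e2]
      push_cast
      field_simp
    · rw [Finset.sum_range_succ, Function.update_self, ← h5, ← hcg']
      have : ∑ k ∈ Finset.range N, (Function.update κ0 N κ k * ((c0 * b ^ k : ℝ) : ℂ)) ^ 2 =
          ∑ k ∈ Finset.range N, (κ0 k * ((c0 * b ^ k : ℝ) : ℂ)) ^ 2 :=
        Finset.sum_congr rfl fun k hk => by
          rw [Function.update_of_ne (Finset.mem_range.1 hk).ne]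
      rw [this, mul_add, ← sub_sub, ← h7, e1, e2, e3]
      push_cast
      field_simp
      ring

theorem fs_re_r {f : ℂ → ℂ} (hf : FSU f) {c μ : ℝ} {a d : ℂ} (hc : 0 < c)
    (he : HasExp f (c : ℂ) a d) (hμ : 0 < μ) (hμ1 : μ ≤ 1) {r : ℝ} (hr : 0 < r) (hr1 : r < 1)
    {b ε : ℝ} (hb : b = 2 * √r / (1 + r)) (hε : ε = 4 * (1 - r) / r) :
    (d / c - (a / c) ^ 2 + μ * (a / c) ^ 2).re ≤
      (1 + 2 * Real.exp (-2 * (1 / μ - 1)) + 2 * (1 - b ^ 2)) / b ^ 2 +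
        (4 * ε + ε ^ 2 + ε * (ε + 2 * (2 / b))) := by
  obtain ⟨hb0, hb1⟩ := fs_b_lt hr hr1 hb
  obtain ⟨n, hn⟩ := exists_pow_lt_of_lt_one (div_pos hc hr) hb1
  rw [lt_div_iff₀ hr] at hn
  obtain ⟨N, κ, c0, g, a0, d0, hκ, h1, h2, h3, h4, h5, h6, h7⟩ :=
    fs_chain hr hr1 hb n f hf c hc (by linarith) a d he
  have hc0 : 0 < c0 := by linarith
  obtain ⟨i1, i2⟩ := fs_initial h3 h4 (sub_pos.2 hr1) (by linarith)
  have hε0 : 0 ≤ ε := by rw [hε]; have := sub_pos.2 hr1; positivity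
  have hA : ‖a0 / c0‖ ≤ ε := by
    rw [norm_div, Complex.norm_real, Real.norm_eq_abs, abs_of_pos hc0, hε]
    gcongr
  have hD : ‖d0 / c0‖ ≤ 4 * ε := by
    rw [norm_div, Complex.norm_real, Real.norm_eq_abs, abs_of_pos hc0, hε]
    have : 4 * (4 * (1 - r) / r) = 16 * (1 - r) / r := by ring
    rw [this]
    gcongr
  have hmain := fs_opt b c0 μ hb0 hb1 hc0 h2 hμ hμ1 N κ hκ
  obtain ⟨S1, hS1⟩ : ∃ x, x = (((1 - b ^ 2) / b : ℝ) : ℂ) *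
          ∑ k ∈ Finset.range N, κ k * ((c0 * b ^ k : ℝ) : ℂ) := ⟨_, rfl⟩
  have hT : ‖S1‖ ≤ 2 / b := by
    have hh : 0 < 1 - b ^ 2 := by nlinarith
    rw [hS1, norm_mul, Complex.norm_real, Real.norm_eq_abs, abs_of_pos (div_pos hh hb0)]
    have : ‖∑ k ∈ Finset.range N, κ k * ((c0 * b ^ k : ℝ) : ℂ)‖ ≤ 1 / (1 - b) := by
      refine (norm_sum_le _ _).trans ?_
      have : ∀ k ∈ Finset.range N, ‖κ k * ((c0 * b ^ k : ℝ) : ℂ)‖ ≤ b ^ k := by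
        intro k _
        rw [norm_mul, hκ, one_mul, Complex.norm_real, Real.norm_eq_abs, abs_of_pos (by positivity)]
        have : 0 < b ^ k := by positivity
        nlinarith
      refine (Finset.sum_le_sum this).trans ?_
      rw [le_div_iff₀ (by linarith), geom_sum_mul_neg]
      have : 0 < b ^ N := by positivity
      linarith
    calc (1 - b ^ 2) / b * ‖∑ k ∈ Finset.range N, κ k * ((c0 * b ^ k : ℝ) : ℂ)‖
        ≤ (1 - b ^ 2) / b * (1 / (1 - b)) := by gcongr
      _ = (1 + b) / b := by
        have : 1 - b ≠ 0 := by linarith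
        field_simp; ring
      _ ≤ 2 / b := by gcongr; linarith
  rw [← hS1] at h6 hmain
  obtain ⟨P, hP⟩ : ∃ x, x = -(((1 - b ^ 2) / b ^ 2 : ℝ) : ℂ) *
          ∑ k ∈ Finset.range N, (κ k * ((c0 * b ^ k : ℝ) : ℂ)) ^ 2 := ⟨_, rfl⟩
  rw [← hP] at hmain
  have e : d / c - (a / c) ^ 2 + μ * (a / c) ^ 2 =
      (P + μ * S1 ^ 2) + (d0 / c0 - (a0 / c0) ^ 2 + μ * ((a0 / c0) * (a0 / c0 - 2 * S1))) := by
    rw [h7, h6, hP]; ring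
  rw [e, Complex.add_re]
  refine add_le_add hmain ((Complex.re_le_norm _).trans ?_)
  have hμn : ‖(μ : ℂ)‖ ≤ 1 := by
    rw [Complex.norm_real, Real.norm_eq_abs, abs_of_pos hμ]; exact hμ1
  calc ‖d0 / c0 - (a0 / c0) ^ 2 + μ * ((a0 / c0) * (a0 / c0 - 2 * S1))‖
      ≤ ‖d0 / c0‖ + ‖a0 / c0‖ ^ 2 + ‖(μ : ℂ)‖ * (‖a0 / c0‖ * (‖a0 / c0‖ + 2 * ‖S1‖)) := by
        refine (norm_add_le _ _).trans (add_le_add ((norm_sub_le _ _).trans (by rw [norm_pow])) ?_)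
        rw [norm_mul, norm_mul]
        gcongr
        refine (norm_sub_le _ _).trans ?_
        rw [norm_mul, Complex.norm_ofNat]
    _ ≤ 4 * ε + ε ^ 2 + 1 * (ε * (ε + 2 * (2 / b))) := by gcongr
    _ = _ := by ring

theorem fs_re {f : ℂ → ℂ} (hf : FSU f) {c μ : ℝ} {a d : ℂ} (hc : 0 < c)
    (he : HasExp f (c : ℂ) a d) (hμ : 0 < μ) (hμ1 : μ ≤ 1) :
    (d / c - (a / c) ^ 2 + μ * (a / c) ^ 2).re ≤ 1 + 2 * Real.exp (-2 * (1 / μ - 1)) := by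
  have hb : ContinuousAt (fun r : ℝ => 2 * √r / (1 + r)) 1 :=
    ContinuousAt.div (by fun_prop) (by fun_prop) (by norm_num)
  have hε : ContinuousAt (fun r : ℝ => 4 * (1 - r) / r) 1 :=
    ContinuousAt.div (by fun_prop) (by fun_prop) (by norm_num)
  have hb1 : 2 * √(1 : ℝ) / (1 + 1) = 1 := by norm_num
  have hcont : ContinuousAt (fun r : ℝ =>
      (1 + 2 * Real.exp (-2 * (1 / μ - 1)) + 2 * (1 - (2 * √r / (1 + r)) ^ 2)) /
        (2 * √r / (1 + r)) ^ 2 +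
        (4 * (4 * (1 - r) / r) + (4 * (1 - r) / r) ^ 2 + (4 * (1 - r) / r) * ((4 * (1 - r) / r) +
          2 * (2 / (2 * √r / (1 + r)))))) 1 := by
    refine ContinuousAt.add (ContinuousAt.div ?_ (hb.pow 2) (by simp only [hb1]; norm_num)) ?_
    · exact continuousAt_const.add (continuousAt_const.mul (continuousAt_const.sub (hb.pow 2)))
    · refine ((continuousAt_const.mul hε).add (hε.pow 2)).add (hε.mul (hε.add
        (continuousAt_const.mul (continuousAt_const.div hb (by simp only [hb1]; norm_num)))))
  have ht := hcont.tendsto.mono_left (nhdsWithin_le_nhds (s := Iio 1))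
  have := ge_of_tendsto ht (b := (d / c - (a / c) ^ 2 + μ * (a / c) ^ 2).re) (by
    filter_upwards [Ioo_mem_nhdsLT (zero_lt_one' ℝ)] with r hr
    exact fs_re_r hf hc he hμ hμ1 hr.1 hr.2 rfl rfl)
  simp only [hb1] at this
  norm_num at this ⊢
  exact this

theorem fs_norm {f : ℂ → ℂ} (hf : FSU f) {c μ : ℝ} {a d : ℂ} (hc : 0 < c)
    (he : HasExp f (c : ℂ) a d) (hμ : 0 < μ) (hμ1 : μ ≤ 1) :
    ‖d / c - (a / c) ^ 2 + μ * (a / c) ^ 2‖ ≤ 1 + 2 * Real.exp (-2 * (1 / μ - 1)) := by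
  obtain ⟨Φ, hΦ⟩ : ∃ x, x = d / c - (a / c) ^ 2 + μ * (a / c) ^ 2 := ⟨_, rfl⟩
  rw [← hΦ]
  rcases eq_or_ne Φ 0 with h0 | h0
  · rw [h0, norm_zero]; positivity
  obtain ⟨η, hη⟩ := IsAlgClosed.exists_pow_nat_eq ((‖Φ‖ : ℂ) / Φ) (n := 2) two_pos
  have hη1 : ‖η‖ = 1 := by
    have : ‖η‖ ^ 2 = 1 := by
      rw [← norm_pow, hη, norm_div, Complex.norm_real, norm_norm, div_self (norm_ne_zero_iff.2 h0)]
    nlinarith [norm_nonneg η]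
  have hη0 : η ≠ 0 := by intro h; rw [h] at hη1; simp at hη1
  have hm : ∀ z ∈ ball (0 : ℂ) 1, η * z ∈ ball (0 : ℂ) 1 := by
    intro z hz; rw [mem_ball_zero_iff] at *; rwa [norm_mul, hη1, one_mul]
  have hg : FSU (fun z => η⁻¹ * f (η * z)) := by
    refine ⟨?_, ?_, ?_, ?_⟩
    · exact (hf.diff.comp (by fun_prop) hm).const_mul _
    · intro z hz
      have := hf.maps (hm z hz)
      rw [mem_ball_zero_iff] at *
      rwa [norm_mul, norm_inv, hη1, inv_one, one_mul]
    · intro z hz z' hz' h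
      exact mul_left_cancel₀ hη0 (hf.inj (hm z hz) (hm z' hz')
        (mul_left_cancel₀ (inv_ne_zero hη0) h))
    · simp [hf.zero]
  have heg : HasExp (fun z => η⁻¹ * f (η * z)) (c : ℂ) (η * a) (η ^ 2 * d) := by
    obtain ⟨q, hq, rfl, he⟩ := he
    have ht : Filter.Tendsto (fun z : ℂ => η * z) (nhds 0) (nhds 0) := by
      have : ContinuousAt (fun z : ℂ => η * z) 0 := by fun_prop
      simpa [ContinuousAt] using this
    refine ⟨fun z => η ^ 2 * q (η * z), ?_, by simp, ?_⟩
    · refine continuousAt_const.mul (ContinuousAt.comp (g := q) ?_ (by fun_prop))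
      simpa using hq
    · filter_upwards [ht.eventually he] with z hz
      rw [hz]; field_simp
  have := fs_re hg hc heg hμ hμ1
  have e : η ^ 2 * d / c - (η * a / c) ^ 2 + μ * (η * a / c) ^ 2 = (‖Φ‖ : ℂ) := by
    have : η ^ 2 * d / c - (η * a / c) ^ 2 + μ * (η * a / c) ^ 2 = η ^ 2 * Φ := by rw [hΦ]; ring
    rw [this, hη, div_mul_cancel₀ _ h0]
  rwa [e, Complex.ofReal_re] at this

/-- The classical Fekete–Szegő inequality. -/
theorem fs_disc {g : ℂ → ℂ} (hd : DifferentiableOn ℂ g (ball 0 1)) (hi : InjOn g (ball 0 1))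
    (h0 : g 0 = 0) {μ : ℝ} {a d : ℂ} (he : HasExp g 1 a d) (hμ : 0 < μ) (hμ1 : μ ≤ 1) :
    ‖d - a ^ 2 + μ * a ^ 2‖ ≤ 1 + 2 * Real.exp (-2 * (1 / μ - 1)) := by
  have key : ∀ ρ ∈ Ioo (0 : ℝ) 1, ρ ^ 2 * ‖d - a ^ 2 + μ * a ^ 2‖ ≤
      1 + 2 * Real.exp (-2 * (1 / μ - 1)) := by
    intro ρ hρ
    obtain ⟨C, hC⟩ := (isCompact_closedBall (0 : ℂ) ρ).exists_bound_of_continuousOn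
      (hd.continuousOn.mono (closedBall_subset_ball hρ.2))
    have hC0 : 0 ≤ C := (norm_nonneg _).trans (hC 0 (mem_closedBall_self hρ.1.le))
    obtain ⟨M, hM⟩ : ∃ M, M = C + 1 := ⟨_, rfl⟩
    have hM0 : 0 < M := by linarith
    have hMC : (M : ℂ) ≠ 0 := by exact_mod_cast hM0.ne'
    have hρC : (ρ : ℂ) ≠ 0 := by exact_mod_cast hρ.1.ne'
    have hm' : ∀ z ∈ ball (0 : ℂ) 1, (ρ : ℂ) * z ∈ closedBall (0 : ℂ) ρ := by
      intro z hz
      rw [mem_ball_zero_iff] at hz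
      rw [mem_closedBall_zero_iff, norm_mul, Complex.norm_real, Real.norm_eq_abs, abs_of_pos hρ.1]
      nlinarith [hρ.1]
    have hm : ∀ z ∈ ball (0 : ℂ) 1, (ρ : ℂ) * z ∈ ball (0 : ℂ) 1 := fun z hz =>
      closedBall_subset_ball hρ.2 (hm' z hz)
    have hg : FSU (fun z => (M : ℂ)⁻¹ * g (ρ * z)) := by
      refine ⟨?_, ?_, ?_, ?_⟩
      · exact (hd.comp (by fun_prop) hm).const_mul _
      · intro z hz
        have := hC _ (hm' z hz)
        rw [mem_ball_zero_iff, norm_mul, norm_inv, Complex.norm_real, Real.norm_eq_abs,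
          abs_of_pos hM0, inv_mul_lt_iff₀ hM0]
        linarith
      · intro z hz z' hz' h
        exact mul_left_cancel₀ hρC (hi (hm z hz) (hm z' hz')
          (mul_left_cancel₀ (inv_ne_zero hMC) h))
      · simp [h0]
    have heg : HasExp (fun z => (M : ℂ)⁻¹ * g (ρ * z)) ((ρ / M : ℝ) : ℂ) (ρ ^ 2 * a / M)
        (ρ ^ 3 * d / M) := by
      obtain ⟨q, hq, rfl, he⟩ := he
      have ht : Filter.Tendsto (fun z : ℂ => (ρ : ℂ) * z) (nhds 0) (nhds 0) := by
        have : ContinuousAt (fun z : ℂ => (ρ : ℂ) * z) 0 := by fun_prop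
        simpa [ContinuousAt] using this
      refine ⟨fun z => ρ ^ 3 / M * q (ρ * z), ?_, by simp; ring, ?_⟩
      · refine continuousAt_const.mul (ContinuousAt.comp (g := q) ?_ (by fun_prop))
        simpa using hq
      · filter_upwards [ht.eventually he] with z hz
        rw [hz]; push_cast; field_simp
    have := fs_norm hg (div_pos hρ.1 hM0) heg hμ hμ1
    have e : (ρ : ℂ) ^ 3 * d / M / ((ρ / M : ℝ) : ℂ) - (ρ ^ 2 * a / M / ((ρ / M : ℝ) : ℂ)) ^ 2 +
        μ * (ρ ^ 2 * a / M / ((ρ / M : ℝ) : ℂ)) ^ 2 = ρ ^ 2 * (d - a ^ 2 + μ * a ^ 2) := by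
      push_cast; field_simp
    rw [e, norm_mul, norm_pow, Complex.norm_real, Real.norm_eq_abs, abs_of_pos hρ.1] at this
    exact this
  have hcont : ContinuousAt (fun ρ : ℝ => ρ ^ 2 * ‖d - a ^ 2 + μ * a ^ 2‖) 1 := by fun_prop
  have ht := hcont.tendsto.mono_left (nhdsWithin_le_nhds (s := Iio 1))
  have := le_of_tendsto ht (by
    filter_upwards [Ioo_mem_nhdsLT (zero_lt_one' ℝ)] with r hr
    exact key r hr)
  simpa using this

/-! ### Part 4: holomorphic maps between Banach spaces are smooth -/

theorem fs_approx_linear {V W : Type*} [NormedAddCommGroup V] [NormedSpace ℂ V]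
    [NormedAddCommGroup W] [NormedSpace ℂ W] [CompleteSpace W] (A : V → W) {δ C : ℝ}
    (hδ : 0 < δ) (hC : 0 ≤ C)
    (hadd : ∀ h k, ‖h‖ < δ → ‖k‖ < δ → ‖A (h + k) - A h - A k‖ ≤ C * (‖h‖ + ‖k‖) ^ 2)
    (hsm : ∀ (ζ : ℂ) (h : V), ‖h‖ < δ → ‖ζ • h‖ < δ →
      ‖A (ζ • h) - ζ • A h‖ ≤ C * (‖ζ‖ + ‖ζ‖ ^ 2) * ‖h‖ ^ 2)
    (hbd : ∀ h, ‖h‖ < δ → ‖A h‖ ≤ C * ‖h‖) :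
    ∃ L : V →L[ℂ] W, ∀ h, ‖h‖ < δ → ‖A h - L h‖ ≤ 2 * C * ‖h‖ ^ 2 := by
  obtain ⟨B, hB⟩ : ∃ B : ℕ → V → W, ∀ n h, B n h = (2 : ℂ) ^ n • A (((2 : ℂ) ^ n)⁻¹ • h) :=
    ⟨_, fun _ _ => rfl⟩
  have nsm : ∀ (n : ℕ) (h : V), ‖((2 : ℂ) ^ n)⁻¹ • h‖ = ((2 : ℝ) ^ n)⁻¹ * ‖h‖ := by
    intro n h; rw [norm_smul, norm_inv, norm_pow, Complex.norm_ofNat]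
  have p2 : ∀ n : ℕ, (0 : ℝ) < 2 ^ n := fun n => by positivity
  have p2C : ∀ n : ℕ, (2 : ℂ) ^ n ≠ 0 := fun n => pow_ne_zero n two_ne_zero
  have tz : ∀ K : ℝ, Filter.Tendsto (fun n : ℕ => ((2 : ℝ) ^ n)⁻¹ * K) Filter.atTop (nhds 0) := by
    intro K
    have : Filter.Tendsto (fun n : ℕ => ((2 : ℝ)⁻¹) ^ n) Filter.atTop (nhds 0) :=
      tendsto_pow_atTop_nhds_zero_of_lt_one (by norm_num) (by norm_num)
    simpa using this.mul_const K
  have small : ∀ h : V, ∀ᶠ n : ℕ in Filter.atTop, ‖((2 : ℂ) ^ n)⁻¹ • h‖ < δ := by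
    intro h
    simp only [nsm]
    exact (tz ‖h‖).eventually_lt_const hδ
  have claim1 : ∀ h, ‖h‖ < δ → ∀ n, ‖B n h - A h‖ ≤ 2 * C * ‖h‖ ^ 2 := by
    intro h hh n
    have h1 : ((2 : ℝ) ^ n)⁻¹ ≤ 1 := inv_le_one_of_one_le₀ (one_le_pow₀ (by norm_num))
    have e : B n h - A h =
        (2 : ℂ) ^ n • (A (((2 : ℂ) ^ n)⁻¹ • h) - ((2 : ℂ) ^ n)⁻¹ • A h) := by
      rw [smul_sub, smul_smul, mul_inv_cancel₀ (p2C n), one_smul, hB]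
    have h2 := hsm (((2 : ℂ) ^ n)⁻¹) h hh (by
      rw [nsm]; nlinarith [norm_nonneg h])
    rw [norm_inv, norm_pow, Complex.norm_ofNat] at h2
    rw [e, norm_smul, norm_pow, Complex.norm_ofNat]
    calc (2 : ℝ) ^ n * _ ≤ 2 ^ n * (C * (((2 : ℝ) ^ n)⁻¹ + ((2 : ℝ) ^ n)⁻¹ ^ 2) * ‖h‖ ^ 2) := by
          gcongr
      _ = C * (1 + ((2 : ℝ) ^ n)⁻¹) * ‖h‖ ^ 2 := by
          have := (p2 n).ne'; field_simp
      _ ≤ C * (1 + 1) * ‖h‖ ^ 2 := by gcongr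
      _ = _ := by ring
  have claim2 : ∀ n m h, B (n + m) h = (2 : ℂ) ^ n • B m (((2 : ℂ) ^ n)⁻¹ • h) := by
    intro n m h
    rw [hB, hB, smul_smul, smul_smul, pow_add, mul_inv_rev]
  have lim : ∀ h, ∃ l, Filter.Tendsto (fun n => B n h) Filter.atTop (nhds l) := by
    intro h
    obtain ⟨N, hN⟩ := Filter.eventually_atTop.1 (small h)
    have hc : CauchySeq (fun n => B (n + N) h) := by
      refine cauchySeq_of_le_tendsto_0' (fun n => ((2 : ℝ) ^ n)⁻¹ * (2 * C * ‖h‖ ^ 2)) ?_ (tz _)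
      intro n m hnm
      obtain ⟨k, rfl⟩ := Nat.exists_eq_add_of_le hnm
      have e1 : n + k + N = (n + N) + k := by ring
      have s := hN (n + N) (by omega)
      rw [dist_eq_norm, e1, claim2 (n + N) k, hB (n + N) h, ← smul_sub, norm_smul, norm_pow,
        Complex.norm_ofNat, norm_sub_rev]
      have h3 := claim1 _ s k
      rw [nsm] at h3
      have h1 : ((2 : ℝ) ^ (n + N))⁻¹ ≤ (2 ^ n)⁻¹ := by
        gcongr
        · norm_num
        · omega
      calc (2 : ℝ) ^ (n + N) * _ ≤ 2 ^ (n + N) * (2 * C * (((2 : ℝ) ^ (n + N))⁻¹ * ‖h‖) ^ 2) := by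
            gcongr
        _ = ((2 : ℝ) ^ (n + N))⁻¹ * (2 * C * ‖h‖ ^ 2) := by
            have := (p2 (n + N)).ne'; field_simp
        _ ≤ _ := by gcongr
    obtain ⟨l, hl⟩ := cauchySeq_tendsto_of_complete hc
    exact ⟨l, (Filter.tendsto_add_atTop_iff_nat (f := fun n => B n h) N).1 hl⟩
  choose L hL using lim
  have Ladd : ∀ h k, L (h + k) = L h + L k := by
    intro h k
    have t1 := ((hL (h + k)).sub (hL h)).sub (hL k)
    have t2 : Filter.Tendsto (fun n => B n (h + k) - B n h - B n k) Filter.atTop (nhds 0) := by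
      refine squeeze_zero_norm' ?_ (tz (C * (‖h‖ + ‖k‖) ^ 2))
      filter_upwards [small h, small k] with n s1 s2
      have h3 := hadd _ _ s1 s2
      rw [nsm, nsm, ← smul_add] at h3
      rw [hB, hB, hB, ← smul_sub, ← smul_sub, norm_smul, norm_pow, Complex.norm_ofNat]
      calc (2 : ℝ) ^ n * _ ≤ 2 ^ n * (C * (((2 : ℝ) ^ n)⁻¹ * ‖h‖ + ((2 : ℝ) ^ n)⁻¹ * ‖k‖) ^ 2) := by
            gcongr
        _ = _ := by have := (p2 n).ne'; field_simp
    have := tendsto_nhds_unique t1 t2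
    rw [sub_sub] at this
    exact sub_eq_zero.1 this
  have Lsm : ∀ (c : ℂ) h, L (c • h) = c • L h := by
    intro c h
    have t1 := (hL (c • h)).sub ((hL h).const_smul c)
    have t2 : Filter.Tendsto (fun n => B n (c • h) - c • B n h) Filter.atTop (nhds 0) := by
      refine squeeze_zero_norm' ?_ (tz (C * (‖c‖ + ‖c‖ ^ 2) * ‖h‖ ^ 2))
      filter_upwards [small h, small (c • h)] with n s1 s2
      rw [smul_comm] at s2
      have h3 := hsm _ _ s1 s2
      rw [nsm] at h3
      rw [hB, hB, smul_comm c, ← smul_sub, smul_comm _ c, norm_smul, norm_pow, Complex.norm_ofNat]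
      calc (2 : ℝ) ^ n * _ ≤ 2 ^ n * (C * (‖c‖ + ‖c‖ ^ 2) * (((2 : ℝ) ^ n)⁻¹ * ‖h‖) ^ 2) := by
            gcongr
        _ = _ := by have := (p2 n).ne'; field_simp
    exact sub_eq_zero.1 (tendsto_nhds_unique t1 t2)
  have Lbd : ∀ h, ‖L h‖ ≤ C * ‖h‖ := by
    intro h
    refine le_of_tendsto (hL h).norm ?_
    filter_upwards [small h] with n s
    have h3 := hbd _ s
    rw [nsm] at h3
    rw [hB, norm_smul, norm_pow, Complex.norm_ofNat]
    calc (2 : ℝ) ^ n * _ ≤ 2 ^ n * (C * (((2 : ℝ) ^ n)⁻¹ * ‖h‖)) := by gcongr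
      _ = _ := by have := (p2 n).ne'; field_simp
  refine ⟨LinearMap.mkContinuous ⟨⟨L, Ladd⟩, Lsm⟩ C Lbd, fun h hh => ?_⟩
  change ‖A h - L h‖ ≤ _
  rw [norm_sub_rev]
  exact le_of_tendsto ((hL h).sub_const (A h)).norm (Filter.Eventually.of_forall (claim1 h hh))

theorem fs_cauchy {V W : Type*} [NormedAddCommGroup V] [NormedSpace ℂ V]
    [NormedAddCommGroup W] [NormedSpace ℂ W] {G : V → W} {y : V} {R K : ℝ} (hR : 0 < R)
    (hG : DifferentiableOn ℂ G (ball y R)) (hK : ∀ v ∈ ball y R, ‖G v‖ ≤ K) :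
    ‖fderiv ℂ G y‖ ≤ 2 * K / R := by
  refine Complex.norm_fderiv_le_div_of_mapsTo_ball hG (fun v hv => ?_) hR
  rw [mem_closedBall, dist_eq_norm]
  have := hK v hv
  have := hK y (mem_ball_self hR)
  exact (norm_sub_le _ _).trans (by linarith)

theorem fs_fderiv_diff {V W : Type*} [NormedAddCommGroup V] [NormedSpace ℂ V]
    [NormedAddCommGroup W] [NormedSpace ℂ W] [CompleteSpace W] {F : V → W} {s : Set V}
    (hs : IsOpen s) (hF : DifferentiableOn ℂ F s) :
    DifferentiableOn ℂ (fderiv ℂ F) s := by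
  intro x hx
  apply DifferentiableAt.differentiableWithinAt
  obtain ⟨R, hR, hball⟩ : ∃ R > 0, ∀ y ∈ ball x (4 * R), y ∈ s ∧ ‖F y‖ ≤ ‖F x‖ + 1 := by
    have hc : ContinuousAt (fun y => ‖F y‖) x := (hF.continuousOn.continuousAt (hs.mem_nhds hx)).norm
    have : ∀ᶠ y in nhds x, y ∈ s ∧ ‖F y‖ ≤ ‖F x‖ + 1 :=
      (hs.eventually_mem hx).and ((hc.eventually_lt_const (lt_add_one _)).mono fun _ h => h.le)
    obtain ⟨ε, hε, h⟩ := Metric.eventually_nhds_iff_ball.1 this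
    exact ⟨ε / 4, by positivity, fun y hy => h y (by convert! hy using 2; ring)⟩
  obtain ⟨M, hM⟩ : ∃ M, M = ‖F x‖ + 1 := ⟨_, rfl⟩
  have hM0 : 0 < M := by rw [hM]; positivity
  rw [← hM] at hball
  have hdA : ∀ y ∈ ball x (4 * R), DifferentiableAt ℂ F y := fun y hy =>
    hF.differentiableAt (hs.mem_nhds (hball y hy).1)
  have tri : ∀ {y v : V} {p q : ℝ}, y ∈ ball x p → v ∈ ball y q → v ∈ ball x (p + q) := by
    intro y v p q hy hv
    rw [mem_ball] at *
    linarith [dist_triangle v y x]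
  have tri' : ∀ {y h : V} {p q : ℝ}, y ∈ ball x p → ‖h‖ < q → y + h ∈ ball x (p + q) := by
    intro y v p q hy hv
    exact tri hy (by rw [mem_ball, dist_eq_norm]; simpa using hv)
  have hD1 : ∀ y ∈ ball x (3 * R), ‖fderiv ℂ F y‖ ≤ 2 * M / R := by
    intro y hy
    have hsub : ∀ v ∈ ball y R, v ∈ ball x (4 * R) := fun v hv => by
      convert! tri hy hv using 2; ring
    exact fs_cauchy hR (fun v hv => (hdA v (hsub v hv)).differentiableWithinAt)
      (fun v hv => (hball v (hsub v hv)).2)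
  have hlip : ∀ y ∈ ball x (2 * R), ∀ h : V, ‖h‖ < R → ‖F (y + h) - F y‖ ≤ 2 * M / R * ‖h‖ := by
    intro y hy h hh
    have h1 : y + h ∈ ball x (3 * R) := by convert! tri' hy hh using 2; ring
    have h2 : y ∈ ball x (3 * R) := ball_subset_ball (by linarith) hy
    have := (convex_ball x (3 * R)).norm_image_sub_le_of_norm_fderiv_le (𝕜 := ℂ) (f := F)
      (fun v hv => hdA v (ball_subset_ball (by linarith) hv)) hD1 h2 h1
    simpa using this
  have hdt : ∀ (h : V), ‖h‖ < R → ∀ y ∈ ball x (3 * R),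
      HasFDerivAt (fun v => F (v + h)) (fderiv ℂ F (y + h)) y := by
    intro h hh y hy
    have h1 : y + h ∈ ball x (4 * R) := by convert! tri' hy hh using 2; ring
    have := (hdA _ h1).hasFDerivAt.comp y ((hasFDerivAt_id y).add_const h)
    exact this
  obtain ⟨K, hK⟩ : ∃ K, K = 2 * (2 * M / R) / R := ⟨_, rfl⟩
  have hK0 : 0 < K := by rw [hK]; positivity
  have hD2 : ∀ y ∈ ball x R, ∀ h : V, ‖h‖ < R → ‖fderiv ℂ F (y + h) - fderiv ℂ F y‖ ≤ K * ‖h‖ := by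
    intro y hy h hh
    have hsub : ∀ v ∈ ball y R, v ∈ ball x (2 * R) := fun v hv => by
      convert! tri hy hv using 2; ring
    have hd : ∀ v ∈ ball x (3 * R), HasFDerivAt (fun v => F (v + h) - F v)
        (fderiv ℂ F (v + h) - fderiv ℂ F v) v := fun v hv =>
      (hdt h hh v hv).sub (hdA v (ball_subset_ball (by linarith) hv)).hasFDerivAt
    have := fs_cauchy hR (G := fun v => F (v + h) - F v) (y := y) (fun v hv =>
      (hd v (ball_subset_ball (by linarith) (hsub v hv))).differentiableAt.differentiableWithinAt)
      (fun v hv => hlip v (hsub v hv) h hh)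
    rw [(hd y (ball_subset_ball (by linarith) hy)).fderiv] at this
    refine this.trans (le_of_eq ?_)
    rw [hK]; ring
  have hrem : ∀ y ∈ ball x R, ∀ h : V, ‖h‖ < R →
      ‖F (y + h) - F y - fderiv ℂ F y h‖ ≤ K * ‖h‖ ^ 2 := by
    intro y hy h hh
    have hseg : ∀ v ∈ segment ℝ y (y + h), ∃ k : V, ‖k‖ ≤ ‖h‖ ∧ v = y + k := by
      intro v hv
      rw [segment_eq_image'] at hv
      obtain ⟨t, ht, rfl⟩ := hv
      refine ⟨t • h, ?_, by simp⟩
      rw [norm_smul, Real.norm_eq_abs, abs_of_nonneg ht.1]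
      nlinarith [norm_nonneg h, ht.2]
    have := (convex_segment y (y + h)).norm_image_sub_le_of_norm_hasFDerivWithin_le' (𝕜 := ℂ)
      (f := F) (f' := fderiv ℂ F) (φ := fderiv ℂ F y) (C := K * ‖h‖) (fun v hv => by
        obtain ⟨k, hk, rfl⟩ := hseg v hv
        exact (hdA _ (ball_subset_ball (by linarith)
          (tri' hy (lt_of_le_of_lt hk hh)))).hasFDerivAt.hasFDerivWithinAt) (fun v hv => by
        obtain ⟨k, hk, rfl⟩ := hseg v hv
        exact (hD2 y hy k (lt_of_le_of_lt hk hh)).trans (by gcongr))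
      (left_mem_segment ℝ y (y + h)) (right_mem_segment ℝ y (y + h))
    rw [add_sub_cancel_left] at this
    refine this.trans (le_of_eq (by ring))
  have hxb : x ∈ ball x (3 * R) := mem_ball_self (by linarith)
  have hxR : x ∈ ball x R := mem_ball_self hR
  have sub3 : ball x R ⊆ ball x (3 * R) := ball_subset_ball (by linarith)
  have hx0 : ∀ v ∈ ball x (3 * R), HasFDerivAt F (fderiv ℂ F v) v := fun v hv =>
    (hdA v (ball_subset_ball (by linarith) hv)).hasFDerivAt
  obtain ⟨L, hL⟩ := fs_approx_linear (fun h => fderiv ℂ F (x + h) - fderiv ℂ F x)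
    (δ := R / 2) (C := K + 4 * K / R) (by positivity) (by positivity)
    (fun h k hh hk => by
      have hh' : ‖h‖ < R := by linarith
      have hk' : ‖k‖ < R := by linarith
      have hhk : ‖h + k‖ ≤ ‖h‖ + ‖k‖ := norm_add_le _ _
      have hhk' : ‖h + k‖ < R := by linarith
      have hd : ∀ v ∈ ball x (3 * R), HasFDerivAt
          (fun v => F (v + (h + k)) - F (v + h) - F (v + k) + F v)
          (fderiv ℂ F (v + (h + k)) - fderiv ℂ F (v + h) - fderiv ℂ F (v + k) + fderiv ℂ F v) v :=
        fun v hv => (((hdt _ hhk' v hv).sub (hdt _ hh' v hv)).sub (hdt _ hk' v hv)).add (hx0 v hv)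
      have := fs_cauchy hR (K := 2 * K * (‖h‖ + ‖k‖) ^ 2) (fun v hv =>
        (hd v (sub3 hv)).differentiableAt.differentiableWithinAt) (fun v hv => by
          have r1 := hrem v hv _ hhk'
          have r2 := hrem v hv _ hh'
          have r3 := hrem v hv _ hk'
          have e : F (v + (h + k)) - F (v + h) - F (v + k) + F v =
            (F (v + (h + k)) - F v - fderiv ℂ F v (h + k)) - (F (v + h) - F v - fderiv ℂ F v h)
            - (F (v + k) - F v - fderiv ℂ F v k) := by
            rw [map_add]; abel
          rw [e]
          refine (norm_sub_le _ _).trans ((add_le_add_left (norm_sub_le _ _) _).trans ?_)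
          have : ‖h + k‖ ^ 2 ≤ (‖h‖ + ‖k‖) ^ 2 := by gcongr
          nlinarith [norm_nonneg h, norm_nonneg k, mul_nonneg (norm_nonneg h) (norm_nonneg k)])
      rw [(hd x hxb).fderiv] at this
      have e : fderiv ℂ F (x + (h + k)) - fderiv ℂ F x - (fderiv ℂ F (x + h) - fderiv ℂ F x) -
          (fderiv ℂ F (x + k) - fderiv ℂ F x) =
          fderiv ℂ F (x + (h + k)) - fderiv ℂ F (x + h) - fderiv ℂ F (x + k) + fderiv ℂ F x := by
        abel
      rw [e]
      refine this.trans ?_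
      have e2 : 2 * (2 * K * (‖h‖ + ‖k‖) ^ 2) / R = (4 * K / R) * (‖h‖ + ‖k‖) ^ 2 := by ring
      rw [e2]
      gcongr
      linarith)
    (fun ζ h hh hz => by
      have hh' : ‖h‖ < R := by linarith
      have hz' : ‖ζ • h‖ < R := by linarith
      have hd : ∀ v ∈ ball x (3 * R), HasFDerivAt
          (fun v => F (v + ζ • h) - F v - ζ • (F (v + h) - F v))
          (fderiv ℂ F (v + ζ • h) - fderiv ℂ F v - ζ • (fderiv ℂ F (v + h) - fderiv ℂ F v)) v :=
        fun v hv => ((hdt _ hz' v hv).sub (hx0 v hv)).sub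
          (((hdt _ hh' v hv).sub (hx0 v hv)).const_smul ζ)
      have := fs_cauchy hR (K := K * (‖ζ‖ + ‖ζ‖ ^ 2) * ‖h‖ ^ 2) (fun v hv =>
        (hd v (sub3 hv)).differentiableAt.differentiableWithinAt) (fun v hv => by
          have r1 := hrem v hv _ hz'
          have r2 := hrem v hv _ hh'
          have e : F (v + ζ • h) - F v - ζ • (F (v + h) - F v) =
            (F (v + ζ • h) - F v - fderiv ℂ F v (ζ • h)) -
              ζ • (F (v + h) - F v - fderiv ℂ F v h) := by
            rw [map_smul]; simp only [smul_sub]; abel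
          rw [e]
          refine (norm_sub_le _ _).trans ?_
          rw [norm_smul ζ (_ - _)]
          rw [norm_smul] at r1
          have : ‖ζ‖ * ‖F (v + h) - F v - fderiv ℂ F v h‖ ≤ ‖ζ‖ * (K * ‖h‖ ^ 2) := by gcongr
          linarith)
      rw [(hd x hxb).fderiv] at this
      refine this.trans ?_
      have e2 : 2 * (K * (‖ζ‖ + ‖ζ‖ ^ 2) * ‖h‖ ^ 2) / R =
        (2 * K / R) * (‖ζ‖ + ‖ζ‖ ^ 2) * ‖h‖ ^ 2 := by ring
      rw [e2]
      gcongr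
      have : 2 * K / R ≤ 4 * K / R := by gcongr; norm_num
      linarith)
    (fun h hh => by
      refine (hD2 x hxR h (by linarith)).trans ?_
      have : 0 < 4 * K / R := by positivity
      gcongr
      linarith)
  refine HasFDerivAt.differentiableAt (f' := L) ?_
  rw [hasFDerivAt_iff_isLittleO_nhds_zero]
  have hO : (fun h => fderiv ℂ F (x + h) - fderiv ℂ F x - L h) =O[nhds 0] fun h => ‖h‖ ^ 2 := by
    refine Asymptotics.IsBigO.of_bound (2 * (K + 4 * K / R)) ?_
    filter_upwards [ball_mem_nhds (0 : V) (half_pos hR)] with h hh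
    rw [mem_ball_zero_iff] at hh
    simpa using hL h hh
  refine hO.trans_isLittleO ?_
  have := Asymptotics.isLittleO_norm_pow_id (E' := V) (n := 2) (by norm_num)
  exact this


theorem fs_contDiffOn.{u} {V : Type u} [NormedAddCommGroup V] [NormedSpace ℂ V] {s : Set V}
    (hs : IsOpen s) (n : ℕ) : ∀ {W : Type u} [NormedAddCommGroup W] [NormedSpace ℂ W]
    [CompleteSpace W] {F : V → W} (_ : DifferentiableOn ℂ F s), ContDiffOn ℂ n F s := by
  induction n with
  | zero =>
    intro W _ _ _ F hF
    simpa using hF.continuousOn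
  | succ n ih =>
    intro W _ _ _ F hF
    have := (contDiffOn_succ_iff_fderiv_of_isOpen (n := (n : WithTop ℕ∞)) hs).2
      ⟨hF, by simp, ih (fs_fderiv_diff hs hF)⟩
    exact_mod_cast this

/-! ### Part 5: restriction to complex lines -/

theorem fs_iter_coeff {g : ℂ → ℂ} (hg : DifferentiableOn ℂ g (ball 0 1)) (n : ℕ) :
    ((Function.swap dslope (0 : ℂ))^[n] g) 0 = iteratedDeriv n g 0 / (n.factorial : ℂ) := by
  have ha : AnalyticAt ℂ g 0 := hg.analyticAt (ball_mem_nhds 0 one_pos)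
  have hp := ha.hasFPowerSeriesAt
  have h1 := HasFPowerSeriesAt.has_fpower_series_iterate_dslope_fslope n hp
  have h2 := h1.coeff_zero (fun _ => 1)
  have h3 := FormalMultilinearSeries.coeff_iterate_fslope
    (p := FormalMultilinearSeries.ofScalars ℂ (fun n => iteratedDeriv n g 0 / (n.factorial : ℂ))) n 0
  rw [FormalMultilinearSeries.coeff_ofScalars, zero_add] at h3
  rw [← h3, ← h2]
  rfl

theorem fs_slice {X : Type*} [NormedAddCommGroup X] [NormedSpace ℂ X]
    (F : X → X) (hF : ContDiffOn ℂ 3 F (ball 0 1)) (u : X) (g : ℂ → ℂ)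
    (hg : DifferentiableOn ℂ g (ball 0 1)) (hu : ‖u‖ = 1)
    (h : ∀ ζ ∈ ball (0 : ℂ) 1, F (ζ • u) = g ζ • u) (i : ℕ) (hi : i ≤ 3) :
    iteratedFDeriv ℂ i F 0 (fun _ => u) = iteratedDeriv i g 0 • u := by
  obtain ⟨φ, hφ⟩ : ∃ φ : ℂ →L[ℂ] X, ∀ ζ, φ ζ = ζ • u :=
    ⟨ContinuousLinearMap.toSpanSingleton ℂ u, fun ζ => by simp⟩
  have hpre : φ ⁻¹' ball (0 : X) 1 = ball 0 1 := by
    ext ζ; simp [hφ, norm_smul, hu]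
  have h0 : φ 0 = 0 := by simp
  have h1 := φ.iteratedFDerivWithin_comp_right hF isOpen_ball.uniqueDiffOn
    (by rw [hpre]; exact isOpen_ball.uniqueDiffOn) (x := 0) (by simp) (i := i) (by exact_mod_cast hi)
  rw [h0, hpre, iteratedFDerivWithin_of_isOpen i isOpen_ball (mem_ball_self one_pos),
    iteratedFDerivWithin_of_isOpen i isOpen_ball (mem_ball_self one_pos)] at h1
  have h2 : iteratedDeriv i (F ∘ φ) 0 = iteratedFDeriv ℂ i F 0 (fun _ => u) := by
    rw [iteratedDeriv_eq_iteratedFDeriv, h1,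
      ContinuousMultilinearMap.compContinuousLinearMap_apply]
    congr 1
    funext j; simp [hφ]
  rw [← h2]
  have h3 : (F ∘ φ) =ᶠ[nhds 0] fun ζ => g ζ • u := by
    filter_upwards [ball_mem_nhds (0 : ℂ) one_pos] with ζ hζ
    rw [Function.comp_apply, hφ, h ζ hζ]
  rw [h3.iteratedDeriv_eq]
  exact iteratedDeriv_smul_const
    ((hg.analyticAt (ball_mem_nhds 0 one_pos)).contDiffAt) u


/-- **Fekete–Szegő inequality.** Let `F(x) = f(x)·x` be biholomorphic on the unit ball `𝔹`
of a complex Banach space, with `f` holomorphic and `f(0) = 1`. Then for every `u` with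
`‖u‖ = 1` and every `λ ∈ [0,1)`,
`‖(1/3!)·D³F(0)(u,u,u) − λ·(1/2!)·D²F(0)(u, (1/2!)·D²F(0)(u,u))‖ ≤ 1 + 2·exp(−2λ/(1−λ))`. -/
theorem stmt10 {X : Type*} [NormedAddCommGroup X] [NormedSpace ℂ X] [CompleteSpace X]
    (f : X → ℂ) (hf : DifferentiableOn ℂ f (ball (0 : X) 1)) (hf0 : f 0 = 1)
    (F : X → X) (hF : ∀ x ∈ ball (0 : X) 1, F x = f x • x)
    (hbi : IsBiholoOn F (ball (0 : X) 1)) :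
    ∀ u : X, ‖u‖ = 1 → ∀ lam : ℝ, lam ∈ Set.Ico (0 : ℝ) 1 →
      ‖(((3 : ℕ).factorial : ℂ))⁻¹ • iteratedFDeriv ℂ 3 F 0 ![u, u, u] -
          (lam : ℂ) • (((2 : ℕ).factorial : ℂ))⁻¹ •
            iteratedFDeriv ℂ 2 F 0
              ![u, (((2 : ℕ).factorial : ℂ))⁻¹ • iteratedFDeriv ℂ 2 F 0 ![u, u]]‖
        ≤ 1 + 2 * Real.exp (-(2 * lam) / (1 - lam)) := by
  intro u hu lam hlam
  have hu0 : u ≠ 0 := by intro h; rw [h] at hu; simp at hu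
  have hline : ∀ ζ ∈ ball (0 : ℂ) 1, ζ • u ∈ ball (0 : X) 1 := by
    intro ζ hζ
    rw [mem_ball_zero_iff] at *
    rwa [norm_smul, hu, mul_one]
  obtain ⟨g, hg⟩ : ∃ g : ℂ → ℂ, ∀ ζ, g ζ = f (ζ • u) * ζ := ⟨_, fun _ => rfl⟩
  have hgfun : g = fun ζ => f (ζ • u) * ζ := funext hg
  have hslice : ∀ ζ ∈ ball (0 : ℂ) 1, F (ζ • u) = g ζ • u := by
    intro ζ hζ
    rw [hF _ (hline ζ hζ), hg, smul_smul]
  have hfl : DifferentiableOn ℂ (fun ζ : ℂ => f (ζ • u)) (ball 0 1) :=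
    hf.comp (by fun_prop) hline
  have hgd : DifferentiableOn ℂ g (ball 0 1) := by
    rw [hgfun]; exact hfl.mul differentiableOn_id
  have hg0 : g 0 = 0 := by rw [hg]; simp
  have hgi : InjOn g (ball 0 1) := by
    intro z hz z' hz' h
    have h1 : F (z • u) = F (z' • u) := by rw [hslice z hz, hslice z' hz', h]
    have h2 := hbi.2.1 (hline z hz) (hline z' hz') h1
    exact smul_left_injective ℂ hu0 h2
  have hg1 : deriv g 0 = 1 := by
    have h1 : HasDerivAt (fun ζ : ℂ => f (ζ • u)) (deriv (fun ζ : ℂ => f (ζ • u)) 0) 0 :=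
      (hfl.differentiableAt (ball_mem_nhds 0 one_pos)).hasDerivAt
    have h2 := (h1.mul (hasDerivAt_id (0 : ℂ))).deriv
    simp [hf0] at h2
    rw [hgfun]
    exact h2
  have hexp := hasExp_dslope hgd hg0
  rw [hg1] at hexp
  obtain ⟨a, ha⟩ : ∃ x, x = deriv (dslope g 0) 0 := ⟨_, rfl⟩
  obtain ⟨d, hd⟩ : ∃ x, x = deriv (dslope (dslope g 0) 0) 0 := ⟨_, rfl⟩
  rw [← ha, ← hd] at hexp
  have hfs := fs_disc hgd hgi hg0 hexp (μ := 1 - lam) (by linarith [hlam.2]) (by linarith [hlam.1])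
  have ea : (((2 : ℕ).factorial : ℂ))⁻¹ * iteratedDeriv 2 g 0 = a := by
    have := fs_iter_coeff hgd 2
    rw [inv_mul_eq_div, ← this, ha]
    exact dslope_same _ _
  have ed : (((3 : ℕ).factorial : ℂ))⁻¹ * iteratedDeriv 3 g 0 = d := by
    have := fs_iter_coeff hgd 3
    rw [inv_mul_eq_div, ← this, hd]
    exact dslope_same _ _
  have hC3 : ContDiffOn ℂ 3 F (ball 0 1) := by
    exact_mod_cast fs_contDiffOn isOpen_ball 3 hbi.1
  have s2 := fs_slice F hC3 u g hgd hu hslice 2 (by norm_num)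
  have s3 := fs_slice F hC3 u g hgd hu hslice 3 (by norm_num)
  have v2 : (![u, u] : Fin 2 → X) = fun _ => u := by funext j; fin_cases j <;> rfl
  have v3 : (![u, u, u] : Fin 3 → X) = fun _ => u := by funext j; fin_cases j <;> rfl
  have s2' : (((2 : ℕ).factorial : ℂ))⁻¹ • iteratedFDeriv ℂ 2 F 0 ![u, u] = a • u := by
    rw [v2, s2, smul_smul, ea]
  have s3' : (((3 : ℕ).factorial : ℂ))⁻¹ • iteratedFDeriv ℂ 3 F 0 ![u, u, u] = d • u := by
    rw [v3, s3, smul_smul, ed]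
  have s4 : iteratedFDeriv ℂ 2 F 0 ![u, a • u] = a • iteratedFDeriv ℂ 2 F 0 ![u, u] := by
    have := (iteratedFDeriv ℂ 2 F 0).map_update_smul ![u, u] 1 a u
    have w1 : Function.update (![u, u] : Fin 2 → X) 1 (a • u) = ![u, a • u] := by
      funext j; fin_cases j <;> rfl
    have w2 : Function.update (![u, u] : Fin 2 → X) 1 u = ![u, u] := by
      funext j; fin_cases j <;> rfl
    rwa [w1, w2] at this
  rw [s2', s3', s4, smul_comm _ a, s2', smul_smul, smul_smul, ← sub_smul, norm_smul, hu, mul_one]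
  have e1 : d - (lam : ℂ) * a * a = d - a ^ 2 + ((1 - lam : ℝ) : ℂ) * a ^ 2 := by
    push_cast; ring
  have e2 : -2 * (1 / (1 - lam) - 1) = -(2 * lam) / (1 - lam) := by
    have : 1 - lam ≠ 0 := by linarith [hlam.2]
    field_simp; ring
  rw [e2] at hfs
  rw [e1]
  exact hfs
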